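/- (Main theorem) Let σ : S → A be a pre-strategy. The following are equivalent: (i) σ is a strategy, i.e. ccc_A ⊙ σ ≅ σ as pre-strategies on A; (ii) σ : (C(S), ⊇⁻) → (C(A), ⊇⁻) and σ : (C(S), ⊆⁺) → (C(A), ⊆⁺) are discrete fibrations; (iii) σ : (C(S), ⊑_S) → (C(A), ⊑_A) is a discrete fibration for the Scott orders; (iv) σ is courteous and receptive. -/

import Mathlib

/-- An event structure presented as raw data: a set of events, a causality
relation and a consistency predicate on (finite) sets of events. -/
structure ES where
  Evt : Type
  le : Evt → Evt → Prop
  Con : Set (Set Evt)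

namespace ES

/-- Strict causality. -/
def lt (E : ES) (a b : E.Evt) : Prop := E.le a b ∧ a ≠ b

/-- The axioms of event structures: `le` is a partial order, causes `[e]` are
finite, consistency is a nonempty collection of finite sets, closed under
subsets, containing all singletons, and closed under adding causal
dependencies. -/
def IsES (E : ES) : Prop :=
  (∀ e, E.le e e) ∧
  (∀ a b c, E.le a b → E.le b c → E.le a c) ∧
  (∀ a b, E.le a b → E.le b a → a = b) ∧
  (∀ e, {e' | E.le e' e}.Finite) ∧
  E.Con.Nonempty ∧
  (∀ X ∈ E.Con, X.Finite) ∧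
  (∀ e, ({e} : Set E.Evt) ∈ E.Con) ∧
  (∀ X ∈ E.Con, ∀ Y, Y ⊆ X → Y ∈ E.Con) ∧
  (∀ X ∈ E.Con, ∀ e ∈ X, ∀ e', E.le e' e → insert e' X ∈ E.Con)

/-- A (finite) configuration: a finite, consistent and down-closed set of events. -/
def Config (E : ES) (x : Set E.Evt) : Prop :=
  x.Finite ∧ (∀ Y, Y ⊆ x → Y.Finite → Y ∈ E.Con) ∧
  ∀ e ∈ x, ∀ e', E.le e' e → e' ∈ x

/-- Immediate causality `e ⇢ e'`. -/
def imc (E : ES) (a b : E.Evt) : Prop :=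
  E.lt a b ∧ ∀ c, E.le a c → E.le c b → c = a ∨ c = b

/-- Simple parallel composition of event structures. -/
def par (E F : ES) : ES where
  Evt := E.Evt ⊕ F.Evt
  le := fun p q =>
    match p, q with
    | Sum.inl a, Sum.inl b => E.le a b
    | Sum.inr a, Sum.inr b => F.le a b
    | _, _ => False
  Con := {X | Sum.inl ⁻¹' X ∈ E.Con ∧ Sum.inr ⁻¹' X ∈ F.Con}

/-- Projection (hiding): restrict an event structure to a subset `V` of events. -/
def proj (E : ES) (V : Set E.Evt) : ES where
  Evt := ↥V
  le := fun a b => E.le a.val b.val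
  Con := {X | Subtype.val '' X ∈ E.Con}

end ES

/-- A (total) map of event structures: preserves configurations and is
injective on each configuration. -/
def IsMap (E F : ES) (f : E.Evt → F.Evt) : Prop :=
  (∀ x, E.Config x → F.Config (f '' x)) ∧ ∀ x, E.Config x → Set.InjOn f x
/-- An event structure with polarities (`true` = positive/Player,
`false` = negative/Opponent). -/
structure ESP extends ES where
  pol : Evt → Bool

namespace ESP

/-- The dual game: polarities reversed. -/
def dual (A : ESP) : ESP where
  toES := A.toES
  pol := fun a => !A.pol a

/-- Simple parallel composition of games. -/
def par (A B : ESP) : ESP where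
  toES := A.toES.par B.toES
  pol := Sum.elim A.pol B.pol

end ESP

/-- A pre-strategy on the game `A`: a polarity-preserving map of event
structures `σ : S → A`. -/
def IsPreStrategy (S A : ESP) (σ : S.Evt → A.Evt) : Prop :=
  IsMap S.toES A.toES σ ∧ ∀ s, A.pol (σ s) = S.pol s

/-- `polExt pol b x y` means `x ⊆ y` and all events of `y \ x` have polarity `b`;
so `polExt pol true x y` is `x ⊆⁺ y` and `polExt pol false x y` is `x ⊆⁻ y`. -/
def polExt {α : Type} (pol : α → Bool) (b : Bool) (x y : Set α) : Prop :=
  x ⊆ y ∧ ∀ a ∈ y, a ∉ x → pol a = b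

/-- The Scott order: `x ⊑ y` iff `x ⊇⁻ (x ∩ y) ⊆⁺ y`. -/
def scottLE {α : Type} (pol : α → Bool) (x y : Set α) : Prop :=
  polExt pol false (x ∩ y) x ∧ polExt pol true (x ∩ y) y

/-- Courtesy: immediate causal links other than `− ⇢ +` are sent to immediate
causal links of the game. -/
def Courteous (S A : ESP) (σ : S.Evt → A.Evt) : Prop :=
  ∀ s s', S.toES.imc s s' → (S.pol s, S.pol s') ≠ (false, true) →
    A.toES.imc (σ s) (σ s')

/-- Receptivity: every negative extension of `σ x` in the game is matched by a
unique extension of `x`. -/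
def Receptive (S A : ESP) (σ : S.Evt → A.Evt) : Prop :=
  ∀ x, S.toES.Config x → ∀ a, A.pol a = false → a ∉ σ '' x →
    A.toES.Config (insert a (σ '' x)) →
    ∃! s, s ∉ x ∧ S.toES.Config (insert s x) ∧ σ s = a
/-- `σ` is a discrete fibration from `(C(S), rS)` to `(C(A), rA)`: it is
monotone and every `y` with `rA y (σ x)` lifts to a unique `x'` with
`rS x' x` and `σ x' = y`. -/
def DiscFibOn (S A : ES) (σ : S.Evt → A.Evt)
    (rS : Set S.Evt → Set S.Evt → Prop)
    (rA : Set A.Evt → Set A.Evt → Prop) : Prop :=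
  (∀ x x', S.Config x → S.Config x' → rS x x' → rA (σ '' x) (σ '' x')) ∧
  ∀ x, S.Config x → ∀ y, A.Config y → rA y (σ '' x) →
    ∃! x', S.Config x' ∧ rS x' x ∧ σ '' x' = y

/-- The order of the poset `(C, ⊇⁻)`: `x ≤ y` iff `x ⊇⁻ y`, i.e. `y ⊆⁻ x`. -/
def negLE {α : Type} (pol : α → Bool) (x y : Set α) : Prop :=
  polExt pol false y x

/-- The order of the poset `(C, ⊆⁺)`: `x ≤ y` iff `x ⊆⁺ y`. -/
def posLE {α : Type} (pol : α → Bool) (x y : Set α) : Prop :=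
  polExt pol true x y
/-- The generating relation of copycat causality on `A^⊥ ∥ A`:
the causality of `A^⊥ ∥ A` together with the links from each negative
occurrence to the corresponding positive occurrence on the other side. -/
def ccGen (A : ESP) : (A.Evt ⊕ A.Evt) → (A.Evt ⊕ A.Evt) → Prop :=
  fun p q => (A.dual.par A).le p q ∨
    (∃ a, A.pol a = true ∧ p = Sum.inl a ∧ q = Sum.inr a) ∨
    (∃ a, A.pol a = false ∧ p = Sum.inr a ∧ q = Sum.inl a)

/-- The copycat structure `CC_A` on the game `A`. -/
def CC (A : ESP) : ESP where
  Evt := A.Evt ⊕ A.Evt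
  le := Relation.ReflTransGen (ccGen A)
  Con := {X | {e | ∃ e' ∈ X, Relation.ReflTransGen (ccGen A) e e'} ∈ (A.dual.par A).Con}
  pol := (A.dual.par A).pol
/-- The relation `◁` generating the order on the graph `G` of a bijection:
`p ◁ q` when both are in `G` and `p.1 <_S q.1` or `p.2 <_T q.2`. -/
def gRel (S T : ES) (G : Set (S.Evt × T.Evt)) :
    (S.Evt × T.Evt) → (S.Evt × T.Evt) → Prop :=
  fun p q => p ∈ G ∧ q ∈ G ∧ (S.lt p.1 q.1 ∨ T.lt p.2 q.2)

/-- The graph `G` is secured: the reflexive-transitive closure of `◁` on `G`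
is antisymmetric (hence a partial order). -/
def SecuredOn (S T : ES) (G : Set (S.Evt × T.Evt)) : Prop :=
  ∀ p q, Relation.ReflTransGen (gRel S T G) p q →
    Relation.ReflTransGen (gRel S T G) q p → p = q

/-- `G` is (the graph of) a secured bijection `φ : x ≃ σ x = τ y ≃ y` between
configurations `x ∈ C(S)` and `y ∈ C(T)`, an element of `SB(σ, τ)`. -/
def IsSecBij (S T A : ES) (σ : S.Evt → A.Evt) (τ : T.Evt → A.Evt)
    (G : Set (S.Evt × T.Evt)) : Prop :=
  S.Config (Prod.fst '' G) ∧ T.Config (Prod.snd '' G) ∧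
  (∀ p ∈ G, σ p.1 = τ p.2) ∧
  (∀ s ∈ Prod.fst '' G, ∀ t ∈ Prod.snd '' G, σ s = τ t → (s, t) ∈ G) ∧
  σ '' (Prod.fst '' G) = τ '' (Prod.snd '' G) ∧
  SecuredOn S T G

/-- `G` has a top (greatest) element for the induced order. -/
def IsPrime (S T : ES) (G : Set (S.Evt × T.Evt)) : Prop :=
  ∃ p ∈ G, ∀ q ∈ G, Relation.ReflTransGen (gRel S T G) q p

/-- The interaction `S ∧ T` of `σ : S → A` and `τ : T → A`: events are the
prime secured bijections, causality is inclusion of graphs, and a finite set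
of events is consistent when the union of their graphs is a secured bijection. -/
def Interaction (S T A : ES) (σ : S.Evt → A.Evt) (τ : T.Evt → A.Evt) : ES where
  Evt := {G : Set (S.Evt × T.Evt) // IsSecBij S T A σ τ G ∧ IsPrime S T G}
  le := fun G G' => G.val ⊆ G'.val
  Con := {X | X.Finite ∧ IsSecBij S T A σ τ (⋃ G ∈ X, G.val)}
/-- The interaction `CC_A ⊛ S`: the pullback of `σ ∥ id_A : S ∥ A → A ∥ A`
and `ccc_A = id : CC_A → A ∥ A` (polarities ignored). -/
def ccInterES (A S : ESP) (σ : S.Evt → A.Evt) : ES :=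
  Interaction (S.toES.par A.toES) (CC A).toES (A.toES.par A.toES)
    (Sum.map σ id) id

/-- The graph of the bijection `x ∥ y ≃ σ x ∥ y` determined by a pair of
configurations `(x, y) ∈ C(S) × C(A)` (the secured bijection `Ψ⁻¹(x, y)`). -/
def ccGraph (A S : ESP) (σ : S.Evt → A.Evt) (xS : Set S.Evt) (xA : Set A.Evt) :
    Set ((S.Evt ⊕ A.Evt) × (A.Evt ⊕ A.Evt)) :=
  {p | p.1 ∈ Sum.inl '' xS ∪ Sum.inr '' xA ∧ p.2 = Sum.map σ id p.1}

/-- All maximal events of the graph `G` (for its induced order) are visible,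
i.e. project to the right-hand copy of `A`. -/
def MaxVis (A S : ESP) (σ : S.Evt → A.Evt)
    (G : Set ((S.Evt ⊕ A.Evt) × (A.Evt ⊕ A.Evt))) : Prop :=
  ∀ p ∈ G, (∀ q ∈ G, Relation.ReflTransGen
      (gRel (S.toES.par A.toES) (CC A).toES G) p q → q = p) →
    ∃ a : A.Evt, p.1 = Sum.inr a
/-- Visibility of an event of `CC_A ⊛ S`: its top synchronised pair projects
to the right-hand copy of `A`. -/
def ccVis (A S : ESP) (σ : S.Evt → A.Evt) (G : (ccInterES A S σ).Evt) : Prop :=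
  ∃ a : A.Evt,
    ((Sum.inr a, Sum.inr a) : (S.Evt ⊕ A.Evt) × (A.Evt ⊕ A.Evt)) ∈ G.val ∧
    ∀ q ∈ G.val, Relation.ReflTransGen
      (gRel (S.toES.par A.toES) (CC A).toES G.val) q (Sum.inr a, Sum.inr a)

/-- The composition `CC_A ⊙ S`: the projection of `CC_A ⊛ S` to its visible
events. -/
def ccCompES (A S : ESP) (σ : S.Evt → A.Evt) : ES :=
  (ccInterES A S σ).proj {G | ccVis A S σ G}

/-- The labelling map `ccc_A ⊙ σ : CC_A ⊙ S → A` of the composition. -/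
noncomputable def ccCompLabel (A S : ESP) (σ : S.Evt → A.Evt)
    (G : (ccCompES A S σ).Evt) : A.Evt :=
  Exists.choose (G.prop : ccVis A S σ G.val)

/-- The composition `CC_A ⊙ S` as an esp, with polarities inherited from the
right-hand copy of `A`. -/
noncomputable def ccCompESP (A S : ESP) (σ : S.Evt → A.Evt) : ESP where
  toES := ccCompES A S σ
  pol := fun G => A.pol (ccCompLabel A S σ G)

/-- The union of the graphs of the events of the minimal witness
`[z] ∈ C(CC_A ⊛ S)` of a configuration `z ∈ C(CC_A ⊙ S)`. -/
def ccWitUnion (A S : ESP) (σ : S.Evt → A.Evt)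
    (z : Set (ccCompES A S σ).Evt) :
    Set ((S.Evt ⊕ A.Evt) × (A.Evt ⊕ A.Evt)) :=
  ⋃ H ∈ {H : (ccInterES A S σ).Evt | ∃ G ∈ z, H.val ⊆ G.val.val}, H.val

/-- The `C(S)` component `y_S` of the representation via `Ψ` of the minimal
witness of `z ∈ C(CC_A ⊙ S)`. -/
def ccWitS (A S : ESP) (σ : S.Evt → A.Evt)
    (z : Set (ccCompES A S σ).Evt) : Set S.Evt :=
  Sum.inl ⁻¹' (Prod.fst '' ccWitUnion A S σ z)

/-- The `C(A)` component `y_A` of the representation via `Ψ` of the minimal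
witness of `z ∈ C(CC_A ⊙ S)`. -/
def ccWitA (A S : ESP) (σ : S.Evt → A.Evt)
    (z : Set (ccCompES A S σ).Evt) : Set A.Evt :=
  Sum.inr ⁻¹' (Prod.fst '' ccWitUnion A S σ z)

/-- An isomorphism between pre-strategies `σ : S → A` and `τ : T → A` on the
same game: an isomorphism of event structures commuting with the maps to the
game. -/
def PreStratIso (S T A : ESP) (σ : S.Evt → A.Evt) (τ : T.Evt → A.Evt) : Prop :=
  ∃ (f : S.Evt → T.Evt) (g : T.Evt → S.Evt),
    IsMap S.toES T.toES f ∧ IsMap T.toES S.toES g ∧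
    (∀ s, g (f s) = s) ∧ (∀ t, f (g t) = t) ∧ ∀ s, τ (f s) = σ s

/-- `σ` is a strategy: a pre-strategy with `ccc_A ⊙ σ ≅ σ`. -/
noncomputable def IsStrategy (S A : ESP) (σ : S.Evt → A.Evt) : Prop :=
  IsPreStrategy S A σ ∧
  PreStratIso (ccCompESP A S σ) S A (ccCompLabel A S σ) σ


namespace SC

theorem cfg_sub {E : ES} {x y : Set E.Evt} (hx : E.Config x) (h : y ⊆ x)
    (hd : ∀ e ∈ y, ∀ e', E.le e' e → e' ∈ y) : E.Config y :=
  ⟨hx.1.subset h, fun Y hY hf => hx.2.1 Y (hY.trans h) hf, hd⟩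

theorem cfg_prin {E : ES} (hE : E.IsES) (e : E.Evt) : E.Config {e' | E.le e' e} := by
  obtain ⟨hr, ht, ha, hf, hn, hcf, hs, hsub, hins⟩ := hE
  have key : ∀ F : Set E.Evt, F.Finite → F ⊆ {e' | E.le e' e} → insert e F ∈ E.Con := by
    intro F hF
    induction F, hF using Set.Finite.induction_on with
    | empty => intro _; simpa using hs e
    | @insert a F _ _ ih =>
      intro hsubF
      rw [Set.insert_comm]
      exact hins _ (ih (fun b hb => hsubF (Set.mem_insert_of_mem _ hb))) e
        (Set.mem_insert _ _) a (hsubF (Set.mem_insert _ _))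
  exact ⟨hf e, fun Y hY hYf => hsub _ (key Y hYf hY) _ (Set.subset_insert _ _),
    fun a ha b hb => ht _ _ _ hb ha⟩

theorem cfg_inter {E : ES} {x y : Set E.Evt} (hx : E.Config x) (hy : E.Config y) :
    E.Config (x ∩ y) :=
  cfg_sub hx Set.inter_subset_left (fun e he e' h => ⟨hx.2.2 e he.1 e' h, hy.2.2 e he.2 e' h⟩)

theorem reflects {S A : ES} (hS : S.IsES) {σ : S.Evt → A.Evt} (hσ : IsMap S A σ)
    {x : Set S.Evt} (hx : S.Config x) {s s' : S.Evt} (hs : s ∈ x) (hs' : s' ∈ x)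
    (h : A.le (σ s) (σ s')) : S.le s s' := by
  have hc := hσ.1 _ (cfg_prin hS s')
  obtain ⟨u, hu, hus⟩ := hc.2.2 (σ s') ⟨s', hS.1 s', rfl⟩ _ h
  have : u = s := hσ.2 x hx (hx.2.2 _ hs' _ hu) hs hus
  exact this ▸ hu

theorem scott_iff {α : Type} (pol : α → Bool) (y x : Set α) :
    scottLE pol y x ↔ (∀ a ∈ y, pol a = true → a ∈ x) ∧ (∀ a ∈ x, pol a = false → a ∈ y) := by
  unfold scottLE polExt
  constructor
  · rintro ⟨⟨_, h1⟩, _, h2⟩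
    refine ⟨fun a ha hp => ?_, fun a ha hp => ?_⟩
    · by_contra hn
      have := h1 a ha (fun h => hn h.2)
      simp [hp] at this
    · by_contra hn
      have := h2 a ha (fun h => hn h.1)
      simp [hp] at this
  · rintro ⟨h1, h2⟩
    refine ⟨⟨Set.inter_subset_left, fun a ha hn => ?_⟩, Set.inter_subset_right, fun a ha hn => ?_⟩
    · by_contra hp
      exact hn ⟨ha, h1 a ha (by simpa using hp)⟩
    · by_contra hp
      exact hn ⟨h2 a ha (by simpa using hp), ha⟩

theorem polExt_image {S A : ESP} {σ : S.Evt → A.Evt} (hσ : IsPreStrategy S A σ) {b : Bool}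
    {x x' : Set S.Evt} (h : polExt S.pol b x x') : polExt A.pol b (σ '' x) (σ '' x') := by
  refine ⟨Set.image_mono h.1, ?_⟩
  rintro _ ⟨s, hs, rfl⟩ hn
  rw [hσ.2]
  exact h.2 s hs (fun hx => hn ⟨s, hx, rfl⟩)

theorem polExt_of_image {S A : ESP} {σ : S.Evt → A.Evt} (hσ : IsPreStrategy S A σ) {b : Bool}
    {x x' : Set S.Evt} (hx' : S.toES.Config x') (hs : x ⊆ x')
    (h : polExt A.pol b (σ '' x) (σ '' x')) : polExt S.pol b x x' := by
  refine ⟨hs, fun s hs' hn => ?_⟩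
  rw [← hσ.2]
  refine h.2 _ ⟨s, hs', rfl⟩ ?_
  rintro ⟨u, hu, hus⟩
  exact hn (hσ.1.2 x' hx' (hs hu) hs' hus ▸ hu)

theorem scott_image {S A : ESP} {σ : S.Evt → A.Evt} (hσ : IsPreStrategy S A σ)
    {x x' : Set S.Evt} (h : scottLE S.pol x x') : scottLE A.pol (σ '' x) (σ '' x') := by
  rw [scott_iff] at *
  constructor
  · rintro _ ⟨s, hs, rfl⟩ hp
    exact ⟨s, h.1 s hs (by rw [← hσ.2]; exact hp), rfl⟩
  · rintro _ ⟨s, hs, rfl⟩ hp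
    exact ⟨s, h.2 s hs (by rw [← hσ.2]; exact hp), rfl⟩

section
variable {S A : ESP} {σ : S.Evt → A.Evt}

theorem scott_of_fib (hσ : IsPreStrategy S A σ)
    (hneg : DiscFibOn S.toES A.toES σ (negLE S.pol) (negLE A.pol))
    (hpos : DiscFibOn S.toES A.toES σ (posLE S.pol) (posLE A.pol)) :
    DiscFibOn S.toES A.toES σ (scottLE S.pol) (scottLE A.pol) := by
  refine ⟨fun x x' _ _ h => scott_image hσ h, ?_⟩
  intro x hx y hy hyx
  have hyc : A.toES.Config (y ∩ σ '' x) := cfg_inter hy (hσ.1.1 x hx)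
  obtain ⟨x1, ⟨hx1, hx1x, hx1y⟩, hu1⟩ := hpos.2 x hx (y ∩ σ '' x) hyc hyx.2
  obtain ⟨x2, ⟨hx2, hx2x, hx2y⟩, hu2⟩ := hneg.2 x1 hx1 y hy (by rw [hx1y]; exact hyx.1)
  simp only [posLE, negLE, polExt] at hx1x hx2x
  refine ⟨x2, ⟨hx2, ?_, hx2y⟩, ?_⟩
  · rw [scott_iff]
    constructor
    · intro a ha hp
      by_contra hn
      have := hx2x.2 a ha (fun h => hn (hx1x.1 h))
      simp [hp] at this
    · intro a ha hp
      by_contra hn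
      have := hx1x.2 a ha (fun h => hn (hx2x.1 h))
      simp [hp] at this
  · rintro x' ⟨hx', hxx', hxy'⟩
    have e1 : x' ∩ x = x1 := by
      refine hu1 _ ⟨cfg_inter hx' hx, hxx'.2, ?_⟩
      rw [scott_iff] at hxx'
      apply Set.Subset.antisymm
      · rintro _ ⟨s, hs, rfl⟩
        exact ⟨hxy' ▸ ⟨s, hs.1, rfl⟩, s, hs.2, rfl⟩
      · rintro a ⟨ha1, t, ht, rfl⟩
        rw [← hxy'] at ha1
        obtain ⟨s, hs, hst⟩ := ha1
        cases hp : S.pol t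
        · exact ⟨t, ⟨hxx'.2 t ht hp, ht⟩, rfl⟩
        · refine ⟨s, ⟨hs, hxx'.1 s hs ?_⟩, hst⟩
          rw [← hσ.2, hst, hσ.2]; exact hp
    refine hu2 _ ⟨hx', ?_, hxy'⟩
    rw [← e1]; exact hxx'.1

theorem fib_of_scott (hσ : IsPreStrategy S A σ)
    (h : DiscFibOn S.toES A.toES σ (scottLE S.pol) (scottLE A.pol)) :
    DiscFibOn S.toES A.toES σ (negLE S.pol) (negLE A.pol) ∧
    DiscFibOn S.toES A.toES σ (posLE S.pol) (posLE A.pol) := by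
  have negS : ∀ {α : Type} (pol : α → Bool) (x y : Set α), negLE pol x y →
      scottLE pol x y := by
    intro α pol x y h
    rw [scott_iff]
    refine ⟨fun a ha hp => ?_, fun a ha _ => h.1 ha⟩
    by_contra hn
    have := h.2 a ha hn
    simp [hp] at this
  have posS : ∀ {α : Type} (pol : α → Bool) (x y : Set α), posLE pol x y →
      scottLE pol x y := by
    intro α pol x y h
    rw [scott_iff]
    refine ⟨fun a ha _ => h.1 ha, fun a ha hp => ?_⟩
    by_contra hn
    have := h.2 a ha hn
    simp [hp] at this
  constructor
  · refine ⟨fun x x' _ _ h => polExt_image hσ h, ?_⟩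
    intro x hx y hy hyx
    obtain ⟨x1, ⟨hx1, hx1x, hx1y⟩, hu1⟩ := h.2 x hx y hy (negS _ _ _ hyx)
    refine ⟨x1, ⟨hx1, ?_, hx1y⟩, ?_⟩
    · rw [scott_iff] at hx1x
      refine polExt_of_image hσ hx1 ?_ (by rw [hx1y]; exact hyx)
      intro t ht
      cases hp : S.pol t
      · exact hx1x.2 t ht hp
      · have : σ t ∈ σ '' x1 := by rw [hx1y]; exact hyx.1 ⟨t, ht, rfl⟩
        obtain ⟨s, hs, hst⟩ := this
        have hsx := hx1x.1 s hs (by rw [← hσ.2, hst, hσ.2]; exact hp)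
        exact hσ.1.2 x hx hsx ht hst ▸ hs
    · rintro x' ⟨h1, h2, h3⟩
      exact hu1 _ ⟨h1, negS _ _ _ h2, h3⟩
  · refine ⟨fun x x' _ _ h => polExt_image hσ h, ?_⟩
    intro x hx y hy hyx
    obtain ⟨x1, ⟨hx1, hx1x, hx1y⟩, hu1⟩ := h.2 x hx y hy (posS _ _ _ hyx)
    refine ⟨x1, ⟨hx1, ?_, hx1y⟩, ?_⟩
    · rw [scott_iff] at hx1x
      refine polExt_of_image hσ hx ?_ (by rw [hx1y]; exact hyx)
      intro t ht
      cases hp : S.pol t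
      · have : σ t ∈ σ '' x := by apply hyx.1; rw [← hx1y]; exact ⟨t, ht, rfl⟩
        obtain ⟨s, hs, hst⟩ := this
        have hsx := hx1x.2 s hs (by rw [← hσ.2, hst, hσ.2]; exact hp)
        exact hσ.1.2 x1 hx1 hsx ht hst ▸ hs
      · exact hx1x.1 t ht hp
    · rintro x' ⟨h1, h2, h3⟩
      exact hu1 _ ⟨h1, posS _ _ _ h2, h3⟩

theorem exists_min {E : ES} (hE : E.IsES) {X : Set E.Evt} (hf : X.Finite) (hn : X.Nonempty) :
    ∃ m ∈ X, ∀ b ∈ X, E.le b m → b = m := by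
  letI : PartialOrder E.Evt :=
    { le := E.le, le_refl := hE.1, le_trans := hE.2.1, le_antisymm := hE.2.2.1 }
  obtain ⟨m, hm⟩ := hf.exists_minimal hn
  exact ⟨m, hm.1, fun b hb h => le_antisymm h (hm.2 hb h)⟩

theorem exists_max {E : ES} (hE : E.IsES) {X : Set E.Evt} (hf : X.Finite) (hn : X.Nonempty) :
    ∃ m ∈ X, ∀ b ∈ X, E.le m b → b = m := by
  letI : PartialOrder E.Evt :=
    { le := E.le, le_refl := hE.1, le_trans := hE.2.1, le_antisymm := hE.2.2.1 }
  obtain ⟨m, hm⟩ := hf.exists_maximal hn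
  exact ⟨m, hm.1, fun b hb h => le_antisymm (hm.2 hb h) h⟩

/-- Induction along immediate causality: a set closed under immediate predecessors
is down-closed. -/
theorem down_of_imc {E : ES} (hE : E.IsES) {X : Set E.Evt}
    (h : ∀ e ∈ X, ∀ e', E.imc e' e → e' ∈ X) : ∀ e ∈ X, ∀ e', E.le e' e → e' ∈ X := by
  intro e he e' hle
  by_contra hn
  obtain ⟨m, ⟨hmX, hm1, hm2⟩, hmin⟩ := exists_min hE (X := {c | c ∈ X ∧ E.le e' c ∧ E.le c e})
    ((hE.2.2.2.1 e).subset (fun c hc => hc.2.2)) ⟨e, he, hle, hE.1 e⟩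
  have hne : e' ≠ m := fun h => hn (h ▸ hmX)
  obtain ⟨k, ⟨hk1, hk2, hk3⟩, hmax⟩ := exists_max hE
    (X := {c | E.le e' c ∧ E.le c m ∧ c ≠ m})
    ((hE.2.2.2.1 m).subset (fun c hc => hc.2.1)) ⟨e', hE.1 e', hm1, hne⟩
  have hkX : k ∈ X := by
    refine h m hmX k ⟨⟨hk2, hk3⟩, fun c hc1 hc2 => ?_⟩
    by_cases hcm : c = m
    · exact Or.inr hcm
    · exact Or.inl (hmax c ⟨hE.2.1 _ _ _ hk1 hc1, hc2, hcm⟩ hc1)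
  exact hk3 (hmin k ⟨hkX, hk1, hE.2.1 _ _ _ hk2 hm2⟩ hk2)

theorem cfg_insert_min {E : ES} (hE : E.IsES) {x y : Set E.Evt} (hx : E.Config x)
    (hy : E.Config y) (hxy : x ⊆ y) (hne : ¬ y ⊆ x) :
    ∃ a ∈ y, a ∉ x ∧ E.Config (insert a x) := by
  obtain ⟨b, hb, hbx⟩ := Set.not_subset.1 hne
  obtain ⟨m, ⟨hmy, hmx⟩, hmin⟩ := exists_min hE (X := y \ x) (hy.1.subset Set.sdiff_subset)
    ⟨b, hb, hbx⟩
  refine ⟨m, hmy, hmx, cfg_sub hy (Set.insert_subset hmy hxy) ?_⟩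
  rintro e (rfl | he) e' hle
  · by_cases h : e' ∈ x
    · exact Or.inr h
    · exact Or.inl (hmin e' ⟨hy.2.2 _ hmy _ hle, h⟩ hle)
  · exact Or.inr (hx.2.2 _ he _ hle)

theorem posfib_of_court (hS : S.toES.IsES) (hσ : IsPreStrategy S A σ) (hc : Courteous S A σ) :
    DiscFibOn S.toES A.toES σ (posLE S.pol) (posLE A.pol) := by
  refine ⟨fun x x' _ _ h => polExt_image hσ h, ?_⟩
  intro x hx y hy hyx
  have himg : σ '' {s | s ∈ x ∧ σ s ∈ y} = y := by
    apply Set.Subset.antisymm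
    · rintro _ ⟨s, hs, rfl⟩; exact hs.2
    · intro a ha
      obtain ⟨s, hs, rfl⟩ := hyx.1 ha
      exact ⟨s, ⟨hs, ha⟩, rfl⟩
  refine ⟨{s | s ∈ x ∧ σ s ∈ y}, ⟨?_, ?_, himg⟩, ?_⟩
  · refine cfg_sub hx (fun s hs => hs.1) (down_of_imc hS ?_)
    rintro s ⟨hsx, hsy⟩ s0 himc
    have hs0 := hx.2.2 _ hsx _ himc.1.1
    refine ⟨hs0, ?_⟩
    by_contra hn
    have hp := hyx.2 (σ s0) ⟨s0, hs0, rfl⟩ hn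
    rw [hσ.2] at hp
    have := hc s0 s himc (by simp [hp])
    exact hn (hy.2.2 _ hsy _ this.1.1)
  · refine polExt_of_image hσ hx (fun s hs => hs.1) (by rw [himg]; exact hyx)
  · rintro x' ⟨h1, h2, h3⟩
    ext s
    constructor
    · intro hs
      exact ⟨h2.1 hs, h3 ▸ ⟨s, hs, rfl⟩⟩
    · rintro ⟨hs, hsy⟩
      rw [← h3] at hsy
      obtain ⟨t, ht, hts⟩ := hsy
      exact hσ.1.2 x hx (h2.1 ht) hs hts ▸ ht

theorem negext_unique (hS : S.toES.IsES) (hσ : IsPreStrategy S A σ)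
    (hc : Courteous S A σ) (hr : Receptive S A σ) {x x' x'' : Set S.Evt}
    (hx' : S.toES.Config x') (hx'' : S.toES.Config x'')
    (h' : polExt S.pol false x x') (h'' : polExt S.pol false x x'')
    (he : σ '' x' = σ '' x'') : x' ⊆ x'' := by
  by_contra hne
  have hw := cfg_inter hx' hx''
  obtain ⟨s, hs, hsw, hsc⟩ := cfg_insert_min hS hw hx' Set.inter_subset_left
    (fun h => hne (h.trans Set.inter_subset_right))
  have hsx : s ∉ x := fun h => hsw ⟨hs, h''.1 h⟩
  have hsp := h'.2 s hs hsx
  have hst : σ s ∈ σ '' x'' := he ▸ ⟨s, hs, rfl⟩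
  obtain ⟨t, ht, hts⟩ := hst
  have htw : t ∉ x' ∩ x'' := by
    intro h
    have := hσ.1.2 x' hx' h.1 hs hts
    exact hsw (this ▸ h)
  have hcA := hσ.1.1 _ hsc
  rw [Set.image_insert_eq] at hcA
  have hsA : σ s ∉ σ '' (x' ∩ x'') := by
    rintro ⟨u, hu, hus⟩
    exact hsw (hσ.1.2 x' hx' hu.1 hs hus ▸ hu)
  have htp : S.pol t = false := by rw [← hσ.2, hts, hσ.2]; exact hsp
  have htc : S.toES.Config (insert t (x' ∩ x'')) := by
    refine cfg_sub hx'' (Set.insert_subset ht Set.inter_subset_right) (down_of_imc hS ?_)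
    rintro e (rfl | hme) e' himc
    · have hA := hc e' e himc (by simp [htp])
      have h2 := hcA.2.2 (σ s) (Set.mem_insert _ _) (σ e') (hts ▸ hA.1.1)
      rcases h2 with h2 | ⟨u, hu, hue⟩
      · exact absurd (h2.trans hts.symm) hA.1.2
      · have := hσ.1.2 x'' hx'' hu.2 (hx''.2.2 _ ht _ himc.1.1) hue
        exact Or.inr (this ▸ hu)
    · exact Or.inr (hw.2.2 _ hme _ himc.1.1)
  obtain ⟨v, _, hv⟩ := hr _ hw (σ s) (by rw [hσ.2]; exact hsp) hsA hcA
  have e1 := hv s ⟨hsw, hsc, rfl⟩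
  have e2 := hv t ⟨htw, htc, hts⟩
  exact hsw ⟨hs, by rw [e1, ← e2]; exact ht⟩

theorem negext_exists (hA : A.toES.IsES) (hσ : IsPreStrategy S A σ)
    (hr : Receptive S A σ) {y : Set A.Evt} (hy : A.toES.Config y) :
    ∀ n : ℕ, ∀ x : Set S.Evt, S.toES.Config x → polExt A.pol false (σ '' x) y →
      (y \ σ '' x).ncard ≤ n → ∃ x', S.toES.Config x' ∧ x ⊆ x' ∧ σ '' x' = y := by
  intro n
  induction n with
  | zero =>
    intro x hx hxy hn
    refine ⟨x, hx, subset_rfl, hxy.1.antisymm ?_⟩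
    have := (Set.ncard_eq_zero (hy.1.subset Set.sdiff_subset)).1 (Nat.le_zero.1 hn)
    exact Set.sdiff_eq_empty.1 this
  | succ n ih =>
    intro x hx hxy hn
    by_cases hne : y ⊆ σ '' x
    · exact ⟨x, hx, subset_rfl, hxy.1.antisymm hne⟩
    obtain ⟨a, hay, hax, hac⟩ := cfg_insert_min hA (hσ.1.1 x hx) hy hxy.1 hne
    obtain ⟨s, ⟨hs1, hs2, rfl⟩, _⟩ := hr x hx a (hxy.2 a hay hax) hax hac
    have him : σ '' insert s x = insert (σ s) (σ '' x) := Set.image_insert_eq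
    obtain ⟨x', h1, h2, h3⟩ := ih (insert s x) hs2
      ⟨by rw [him]; exact Set.insert_subset hay hxy.1,
        fun b hb hn => hxy.2 b hb (fun h => hn (by rw [him]; exact Or.inr h))⟩ (by
        have : (y \ σ '' insert s x).ncard < (y \ σ '' x).ncard := by
          apply Set.ncard_lt_ncard _ (hy.1.subset Set.sdiff_subset)
          rw [him]
          refine ⟨fun b hb => ⟨hb.1, fun h => hb.2 (Or.inr h)⟩, fun h => ?_⟩
          exact (h ⟨hay, hax⟩).2 (Or.inl rfl)
        omega)
    exact ⟨x', h1, (Set.subset_insert _ _).trans h2, h3⟩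

theorem negfib_of_court (hA : A.toES.IsES) (hS : S.toES.IsES) (hσ : IsPreStrategy S A σ)
    (hc : Courteous S A σ) (hr : Receptive S A σ) :
    DiscFibOn S.toES A.toES σ (negLE S.pol) (negLE A.pol) := by
  refine ⟨fun x x' _ _ h => polExt_image hσ h, ?_⟩
  intro x hx y hy hyx
  obtain ⟨x', h1, h2, h3⟩ := negext_exists hA hσ hr hy _ x hx hyx le_rfl
  have hp : polExt S.pol false x x' := polExt_of_image hσ h1 h2 (by rw [h3]; exact hyx)
  refine ⟨x', ⟨h1, hp, h3⟩, ?_⟩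
  rintro x'' ⟨g1, g2, g3⟩
  exact (negext_unique hS hσ hc hr g1 h1 g2 hp (g3.trans h3.symm)).antisymm
    (negext_unique hS hσ hc hr h1 g1 hp g2 (h3.trans g3.symm))

theorem recep_of_fib (hσ : IsPreStrategy S A σ)
    (hneg : DiscFibOn S.toES A.toES σ (negLE S.pol) (negLE A.pol)) : Receptive S A σ := by
  intro x hx a hap hax hac
  have hext : polExt A.pol false (σ '' x) (insert a (σ '' x)) := by
    refine ⟨Set.subset_insert _ _, ?_⟩
    rintro b (rfl | hb) hn
    · exact hap
    · exact absurd hb hn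
  obtain ⟨x', ⟨h1, h2, h3⟩, hu⟩ := hneg.2 x hx _ hac hext
  have : a ∈ σ '' x' := by rw [h3]; exact Or.inl rfl
  obtain ⟨s, hs, rfl⟩ := this
  have hsx : s ∉ x := fun h => hax ⟨s, h, rfl⟩
  have hx' : x' = insert s x := by
    apply Set.Subset.antisymm
    · intro t ht
      have : σ t ∈ σ '' x' := ⟨t, ht, rfl⟩
      rw [h3] at this
      rcases this with h | ⟨u, hu, hut⟩
      · exact Or.inl (hσ.1.2 x' h1 ht hs h)
      · exact Or.inr (hσ.1.2 x' h1 (h2.1 hu) ht hut ▸ hu)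
    · exact Set.insert_subset hs h2.1
  refine ⟨s, ⟨hsx, hx' ▸ h1, rfl⟩, ?_⟩
  rintro t ⟨ht1, ht2, ht3⟩
  have := hu (insert t x) ⟨ht2, polExt_of_image hσ ht2 (Set.subset_insert _ _) (by
    rw [Set.image_insert_eq, ht3]; exact hext), by rw [Set.image_insert_eq, ht3]⟩
  have ht : t ∈ insert s x := by rw [← hx', ← this]; exact Or.inl rfl
  rcases ht with h | h
  · exact h
  · exact absurd h ht1

theorem court_of_fib (hA : A.toES.IsES) (hS : S.toES.IsES) (hσ : IsPreStrategy S A σ)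
    (hneg : DiscFibOn S.toES A.toES σ (negLE S.pol) (negLE A.pol))
    (hpos : DiscFibOn S.toES A.toES σ (posLE S.pol) (posLE A.pol)) : Courteous S A σ := by
  intro s s' himc hpol
  obtain ⟨⟨hle, hne⟩, hbt⟩ := himc
  have hx := cfg_prin hS s'
  set x : Set S.Evt := {e | S.le e s'} with hxdef
  have hs'x : s' ∈ x := hS.1 s'
  have hsx : s ∈ x := hle
  have hz : S.toES.Config (x \ {s, s'}) := by
    refine cfg_sub hx Set.sdiff_subset ?_
    rintro e ⟨he, hne'⟩ e' hle'
    refine ⟨hx.2.2 _ he _ hle', ?_⟩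
    rintro (rfl | h)
    · rcases hbt e hle' he with h | h <;> exact hne' (by simp [h])
    · have h' : e' = s' := h
      subst h'
      exact hne' (by simp [hS.2.2.1 _ _ he hle'])
  set z := x \ {s, s'} with hzdef
  have hinj := hσ.1.2 x hx
  have hzA := hσ.1.1 z hz
  have hxA := hσ.1.1 x hx
  have hsz : σ s ∉ σ '' z := by
    rintro ⟨u, hu, hus⟩
    exact hu.2 (by simp [hinj hu.1 hsx hus])
  have hsz' : σ s' ∉ σ '' z := by
    rintro ⟨u, hu, hus⟩
    exact hu.2 (by simp [hinj hu.1 hs'x hus])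
  have hss : σ s ≠ σ s' := fun h => hne (hinj hsx hs'x h)
  have hxz : ∀ t ∈ x, t = s ∨ t = s' ∨ t ∈ z := by
    intro t ht
    by_cases h1 : t = s
    · exact Or.inl h1
    · by_cases h2 : t = s'
      · exact Or.inr (Or.inl h2)
      · exact Or.inr (Or.inr ⟨ht, by simp [h1, h2]⟩)
  suffices hcomp : A.le (σ s) (σ s') by
    refine ⟨⟨hcomp, hss⟩, fun c hc1 hc2 => ?_⟩
    obtain ⟨t, ht, rfl⟩ := hxA.2.2 (σ s') ⟨s', hs'x, rfl⟩ c hc2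
    rcases hxz t ht with rfl | rfl | htz
    · exact Or.inl rfl
    · exact Or.inr rfl
    · exact absurd (hzA.2.2 _ ⟨t, htz, rfl⟩ _ hc1) hsz
  by_contra hncomp
  have hyc : A.toES.Config (insert (σ s') (σ '' z)) := by
    refine cfg_sub hxA (Set.insert_subset ⟨s', hs'x, rfl⟩ (Set.image_mono Set.sdiff_subset)) ?_
    rintro e (rfl | he) e' hle'
    · obtain ⟨t, ht, rfl⟩ := hxA.2.2 (σ s') ⟨s', hs'x, rfl⟩ e' hle'
      rcases hxz t ht with rfl | rfl | htz
      · exact absurd hle' hncomp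
      · exact Or.inl rfl
      · exact Or.inr ⟨t, htz, rfl⟩
    · exact Or.inr (hzA.2.2 _ he _ hle')
  cases hps : S.pol s
  · -- both negative
    have hps' : S.pol s' = false := by
      cases h : S.pol s'
      · rfl
      · exact absurd (by rw [hps, h]) hpol
    obtain ⟨x1, ⟨h1, h2, h3⟩, _⟩ := hneg.2 z hz _ hyc (by
      refine ⟨Set.subset_insert _ _, ?_⟩
      rintro b (rfl | hb) hn
      · rw [hσ.2]; exact hps'
      · exact absurd hb hn)
    obtain ⟨x2, ⟨k1, k2, k3⟩, _⟩ := hneg.2 x1 h1 (σ '' x) hxA (by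
      refine ⟨?_, ?_⟩
      · rw [h3]
        exact Set.insert_subset ⟨s', hs'x, rfl⟩ (Set.image_mono Set.sdiff_subset)
      · rintro _ ⟨t, ht, rfl⟩ hn
        rw [h3] at hn
        rcases hxz t ht with rfl | rfl | htz
        · rw [hσ.2]; exact hps
        · exact absurd (Or.inl rfl) hn
        · exact absurd (Or.inr ⟨t, htz, rfl⟩) hn)
    have hzx : polExt A.pol false (σ '' z) (σ '' x) := by
      refine ⟨Set.image_mono Set.sdiff_subset, ?_⟩
      rintro _ ⟨t, ht, rfl⟩ hn
      rcases hxz t ht with rfl | rfl | htz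
      · rw [hσ.2]; exact hps
      · rw [hσ.2]; exact hps'
      · exact absurd ⟨t, htz, rfl⟩ hn
    obtain ⟨x3, _, hu⟩ := hneg.2 z hz (σ '' x) hxA hzx
    have e1 := hu x ⟨hx, polExt_of_image hσ hx Set.sdiff_subset hzx, rfl⟩
    have e2 := hu x2 ⟨k1, polExt_of_image hσ k1 (h2.1.trans k2.1) (by rw [k3]; exact hzx), k3⟩
    have e3 : x2 = x := e2.trans e1.symm
    have hx1x : x1 ⊆ x := e3 ▸ k2.1
    have : σ s' ∈ σ '' x1 := by rw [h3]; exact Or.inl rfl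
    obtain ⟨t, ht, hts⟩ := this
    have hts' : t = s' := hinj (hx1x ht) hs'x hts
    subst hts'
    have hs1 := h1.2.2 _ ht _ hle
    have : σ s ∈ σ '' x1 := ⟨s, hs1, rfl⟩
    rw [h3] at this
    rcases this with h | h
    · exact hss h
    · exact hsz h
  · obtain ⟨x1, ⟨h1, h2, h3⟩, _⟩ := hpos.2 x hx _ hyc (by
      refine ⟨Set.insert_subset ⟨s', hs'x, rfl⟩ (Set.image_mono Set.sdiff_subset), ?_⟩
      rintro _ ⟨t, ht, rfl⟩ hn
      rcases hxz t ht with rfl | rfl | htz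
      · rw [hσ.2]; exact hps
      · exact absurd (Or.inl rfl) hn
      · exact absurd (Or.inr ⟨t, htz, rfl⟩) hn)
    have : σ s' ∈ σ '' x1 := by rw [h3]; exact Or.inl rfl
    obtain ⟨t, ht, hts⟩ := this
    have hts' : t = s' := hinj (h2.1 ht) hs'x hts
    subst hts'
    have hs1 := h1.2.2 _ ht _ hle
    have : σ s ∈ σ '' x1 := ⟨s, hs1, rfl⟩
    rw [h3] at this
    rcases this with h | h
    · exact hss h
    · exact hsz h

end

end SC

namespace SC

def II (A S : ESP) (σ : S.Evt → A.Evt) (x : Set S.Evt) (y : Set A.Evt) : Prop :=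
  S.toES.Config x ∧ A.toES.Config y ∧ (∀ a ∈ y, A.pol a = true → a ∈ σ '' x) ∧
    (∀ s ∈ x, A.pol (σ s) = false → σ s ∈ y)

def MM (A S : ESP) (σ : S.Evt → A.Evt) (x : Set S.Evt) (y : Set A.Evt) : Prop :=
  ∀ s ∈ x, ∃ s' ∈ x, S.le s s' ∧ S.pol s' = true ∧ σ s' ∈ y

def ccD (A : ESP) : (A.Evt ⊕ A.Evt) → (A.Evt ⊕ A.Evt) → Prop
  | Sum.inl a, Sum.inl b => A.le a b
  | Sum.inr a, Sum.inr b => A.le a b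
  | Sum.inl a, Sum.inr b => ∃ c, A.pol c = true ∧ A.le a c ∧ A.le c b
  | Sum.inr a, Sum.inl b => ∃ c, A.pol c = false ∧ A.le a c ∧ A.le c b

theorem ccD_of_le {A : ESP} (hA : A.toES.IsES) {p q : A.Evt ⊕ A.Evt}
    (h : Relation.ReflTransGen (ccGen A) p q) : ccD A p q := by
  have hr := hA.1
  have ht := hA.2.1
  induction h with
  | refl => cases p <;> exact hr _
  | @tail q r _ hqr ih =>
    rcases hqr with hqr | ⟨a, hp, rfl, rfl⟩ | ⟨a, hp, rfl, rfl⟩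
    · rcases q with b | b <;> rcases r with c | c
      · have hbc : A.le b c := hqr
        rcases p with a | a
        · exact ht _ _ _ ih hbc
        · obtain ⟨d, hd, h1, h2⟩ := ih
          exact ⟨d, hd, h1, ht _ _ _ h2 hbc⟩
      · exact False.elim hqr
      · exact False.elim hqr
      · have hbc : A.le b c := hqr
        rcases p with a | a
        · obtain ⟨d, hd, h1, h2⟩ := ih
          exact ⟨d, hd, h1, ht _ _ _ h2 hbc⟩
        · exact ht _ _ _ ih hbc
    · rcases p with b | b
      · exact ⟨a, hp, ih, hr a⟩
      · obtain ⟨d, hd, h1, h2⟩ := ih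
        exact ht _ _ _ h1 h2
    · rcases p with b | b
      · obtain ⟨d, hd, h1, h2⟩ := ih
        exact ht _ _ _ h1 h2
      · exact ⟨a, hp, ih, hr a⟩

theorem par_cfg {E F : ES} {X : Set (E.Evt ⊕ F.Evt)} :
    (E.par F).Config X ↔ E.Config (Sum.inl ⁻¹' X) ∧ F.Config (Sum.inr ⁻¹' X) := by
  constructor
  · rintro ⟨hf, hc, hd⟩
    refine ⟨⟨hf.preimage Sum.inl_injective.injOn, fun Y hY hYf => ?_, fun e he e' h => ?_⟩,
      ⟨hf.preimage Sum.inr_injective.injOn, fun Y hY hYf => ?_, fun e he e' h => ?_⟩⟩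
    · have := (hc (Sum.inl '' Y) (by rintro _ ⟨a, ha, rfl⟩; exact hY ha) (hYf.image _)).1
      have e : Sum.inl ⁻¹' (Sum.inl '' Y : Set (E.Evt ⊕ F.Evt)) = Y :=
        Set.preimage_image_eq _ Sum.inl_injective
      exact (congrArg (· ∈ E.Con) e).mp this
    · exact hd (Sum.inl e) he (Sum.inl e') h
    · have := (hc (Sum.inr '' Y) (by rintro _ ⟨a, ha, rfl⟩; exact hY ha) (hYf.image _)).2
      have e : Sum.inr ⁻¹' (Sum.inr '' Y : Set (E.Evt ⊕ F.Evt)) = Y :=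
        Set.preimage_image_eq _ Sum.inr_injective
      exact (congrArg (· ∈ F.Con) e).mp this
    · exact hd (Sum.inr e) he (Sum.inr e') h
  · rintro ⟨⟨hf1, hc1, hd1⟩, hf2, hc2, hd2⟩
    refine ⟨?_, fun Y hY hYf => ⟨?_, ?_⟩, ?_⟩
    · refine ((hf1.image Sum.inl).union (hf2.image Sum.inr)).subset ?_
      rintro (a | a) ha
      · exact Or.inl ⟨a, ha, rfl⟩
      · exact Or.inr ⟨a, ha, rfl⟩
    · exact hc1 _ (Set.preimage_mono hY) (hYf.preimage Sum.inl_injective.injOn)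
    · exact hc2 _ (Set.preimage_mono hY) (hYf.preimage Sum.inr_injective.injOn)
    · rintro (a | a) ha (b | b) h
      · exact hd1 a ha b h
      · exact False.elim h
      · exact False.elim h
      · exact hd2 a ha b h

section
variable {A S : ESP} {σ : S.Evt → A.Evt}

theorem mem_ccGraph_inl {x : Set S.Evt} {y : Set A.Evt} {s : S.Evt} {q : A.Evt ⊕ A.Evt} :
    ((Sum.inl s, q) : (S.Evt ⊕ A.Evt) × (A.Evt ⊕ A.Evt)) ∈ ccGraph A S σ x y ↔
      s ∈ x ∧ q = Sum.inl (σ s) := by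
  simp [ccGraph]

theorem mem_ccGraph_inr {x : Set S.Evt} {y : Set A.Evt} {a : A.Evt} {q : A.Evt ⊕ A.Evt} :
    ((Sum.inr a, q) : (S.Evt ⊕ A.Evt) × (A.Evt ⊕ A.Evt)) ∈ ccGraph A S σ x y ↔
      a ∈ y ∧ q = Sum.inr a := by
  simp [ccGraph]

theorem fst_ccGraph (x : Set S.Evt) (y : Set A.Evt) :
    Prod.fst '' ccGraph A S σ x y = Sum.inl '' x ∪ Sum.inr '' y := by
  ext e
  constructor
  · rintro ⟨p, hp, rfl⟩; exact hp.1
  · intro he; exact ⟨(e, Sum.map σ id e), ⟨he, rfl⟩, rfl⟩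

theorem snd_ccGraph (x : Set S.Evt) (y : Set A.Evt) :
    Prod.snd '' ccGraph A S σ x y = Sum.inl '' (σ '' x) ∪ Sum.inr '' y := by
  ext e
  constructor
  · rintro ⟨⟨p | p, q⟩, hp, rfl⟩
    · rw [mem_ccGraph_inl] at hp
      exact Or.inl ⟨σ p, ⟨p, hp.1, rfl⟩, hp.2.symm⟩
    · rw [mem_ccGraph_inr] at hp
      exact Or.inr ⟨p, hp.1, hp.2.symm⟩
  · rintro (⟨_, ⟨s, hs, rfl⟩, rfl⟩ | ⟨a, ha, rfl⟩)
    · exact ⟨(Sum.inl s, _), mem_ccGraph_inl.2 ⟨hs, rfl⟩, rfl⟩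
    · exact ⟨(Sum.inr a, _), mem_ccGraph_inr.2 ⟨ha, rfl⟩, rfl⟩

def gD (A S : ESP) (σ : S.Evt → A.Evt) (x : Set S.Evt) (y : Set A.Evt) :
    (S.Evt ⊕ A.Evt) → (S.Evt ⊕ A.Evt) → Prop
  | Sum.inl s, Sum.inl s' => s ∈ x ∧ s' ∈ x ∧ S.le s s'
  | Sum.inl s, Sum.inr b => s ∈ x ∧ b ∈ y ∧
      ∃ s' ∈ x, S.pol s' = true ∧ S.le s s' ∧ A.le (σ s') b
  | Sum.inr a, Sum.inl s => a ∈ y ∧ s ∈ x ∧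
      ∃ s' ∈ x, S.pol s' = false ∧ A.le a (σ s') ∧ S.le s' s
  | Sum.inr a, Sum.inr b => a ∈ y ∧ b ∈ y ∧ A.le a b

theorem gstep (hA : A.toES.IsES) (hS : S.toES.IsES) (hσ : IsPreStrategy S A σ)
    {x : Set S.Evt} {y : Set A.Evt} (h : II A S σ x y)
    {p q : (S.Evt ⊕ A.Evt) × (A.Evt ⊕ A.Evt)}
    (hg : gRel (S.toES.par A.toES) (CC A).toES (ccGraph A S σ x y) p q) :
    p.1 ≠ q.1 ∧ gD A S σ x y p.1 q.1 := by
  obtain ⟨hx, hy, h1, h2⟩ := h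
  obtain ⟨hp, hq, hlt⟩ := hg
  refine ⟨?_, ?_⟩
  · intro he
    rcases hlt with hlt | hlt
    · exact hlt.2 he
    · refine hlt.2 ?_
      rw [hp.2, hq.2, he]
  · obtain ⟨p1, p2⟩ := p
    obtain ⟨q1, q2⟩ := q
    rcases p1 with s | a <;> rcases q1 with s' | b
    · replace hp := mem_ccGraph_inl.1 hp; obtain ⟨hp, rfl⟩ := hp
      replace hq := mem_ccGraph_inl.1 hq; obtain ⟨hq, rfl⟩ := hq
      refine ⟨hp, hq, ?_⟩
      rcases hlt with hlt | hlt
      · exact hlt.1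
      · exact reflects hS hσ.1 hx hp hq (ccD_of_le hA hlt.1)
    · replace hp := mem_ccGraph_inl.1 hp; obtain ⟨hp, rfl⟩ := hp
      replace hq := mem_ccGraph_inr.1 hq; obtain ⟨hq, rfl⟩ := hq
      refine ⟨hp, hq, ?_⟩
      rcases hlt with hlt | hlt
      · exact False.elim hlt.1
      · obtain ⟨c, hc, h3, h4⟩ := ccD_of_le hA hlt.1
        obtain ⟨s', hs', rfl⟩ := h1 c (hy.2.2 _ hq _ h4) hc
        exact ⟨s', hs', by rw [← hσ.2]; exact hc, reflects hS hσ.1 hx hp hs' h3, h4⟩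
    · replace hp := mem_ccGraph_inr.1 hp; obtain ⟨hp, rfl⟩ := hp
      replace hq := mem_ccGraph_inl.1 hq; obtain ⟨hq, rfl⟩ := hq
      refine ⟨hp, hq, ?_⟩
      rcases hlt with hlt | hlt
      · exact False.elim hlt.1
      · obtain ⟨c, hc, h3, h4⟩ := ccD_of_le hA hlt.1
        obtain ⟨u, hu, rfl⟩ := (hσ.1.1 x hx).2.2 _ ⟨s', hq, rfl⟩ c h4
        exact ⟨u, hu, by rw [← hσ.2]; exact hc, h3, reflects hS hσ.1 hx hu hq h4⟩
    · replace hp := mem_ccGraph_inr.1 hp; obtain ⟨hp, rfl⟩ := hp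
      replace hq := mem_ccGraph_inr.1 hq; obtain ⟨hq, rfl⟩ := hq
      refine ⟨hp, hq, ?_⟩
      rcases hlt with hlt | hlt
      · exact hlt.1
      · exact ccD_of_le hA hlt.1

theorem ncard_lt {E : ES} (hE : E.IsES) {a b : E.Evt} (h : E.le a b) (hn : a ≠ b) :
    {e | E.le e a}.ncard < {e | E.le e b}.ncard := by
  apply Set.ncard_lt_ncard _ (hE.2.2.2.1 b)
  refine ⟨fun e he => hE.2.1 _ _ _ he h, fun hs => ?_⟩
  exact hn (hE.2.2.1 _ _ h (hs (hE.1 b)))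

open Classical in
noncomputable def rk (A S : ESP) (σ : S.Evt → A.Evt) (x : Set S.Evt) : S.Evt ⊕ A.Evt → ℕ
  | Sum.inl s => 3 * {e | S.le e s}.ncard + (if S.pol s = true then 0 else 1)
  | Sum.inr a => if h : ∃ s ∈ x, σ s = a then
      3 * {e | S.le e h.choose}.ncard + (if S.pol h.choose = true then 1 else 0)
      else 3 * x.ncard + 10 + {e | A.le e a}.ncard

theorem rk_inr (hσ : IsPreStrategy S A σ) {x : Set S.Evt} (hx : S.toES.Config x) {s : S.Evt}
    (hs : s ∈ x) : rk A S σ x (Sum.inr (σ s)) =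
      3 * {e | S.le e s}.ncard + (if S.pol s = true then 1 else 0) := by
  have h : ∃ u ∈ x, σ u = σ s := ⟨s, hs, rfl⟩
  have he : h.choose = s := hσ.1.2 x hx h.choose_spec.1 hs h.choose_spec.2
  simp only [rk]
  rw [dif_pos h, he]

theorem rk_inr' {x : Set S.Evt} {a : A.Evt} (ha : a ∉ σ '' x) :
    rk A S σ x (Sum.inr a) = 3 * x.ncard + 10 + {e | A.le e a}.ncard := by
  have h : ¬ ∃ u ∈ x, σ u = a := ha
  simp only [rk]
  rw [dif_neg h]

theorem rk_lt (hA : A.toES.IsES) (hS : S.toES.IsES) (hσ : IsPreStrategy S A σ)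
    {x : Set S.Evt} {y : Set A.Evt} (h : II A S σ x y) {e e' : S.Evt ⊕ A.Evt}
    (hne : e ≠ e') (hg : gD A S σ x y e e') : rk A S σ x e < rk A S σ x e' := by
  obtain ⟨hx, hy, h1, h2⟩ := h
  have hle : ∀ s ∈ x, {e | S.le e s}.ncard ≤ x.ncard := fun s hs =>
    Set.ncard_le_ncard (fun e he => hx.2.2 _ hs _ he) hx.1
  have hxA := hσ.1.1 x hx
  rcases e with s | a <;> rcases e' with s' | b
  · obtain ⟨hs, hs', hl⟩ := hg
    have := ncard_lt hS hl (fun h => hne (by rw [h]))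
    simp only [rk]
    split_ifs <;> omega
  · obtain ⟨hs, hb, s', hs', hp, hl, hl'⟩ := hg
    by_cases hbx : b ∈ σ '' x
    · obtain ⟨u, hu, rfl⟩ := hbx
      have hl2 := reflects hS hσ.1 hx hs' hu hl'
      rw [rk_inr hσ hx hu]
      simp only [rk]
      by_cases hsu : s = u
      · subst hsu
        have : s = s' := hS.2.2.1 _ _ hl hl2
        subst this
        simp [hp]
      · have := ncard_lt hS (hS.2.1 _ _ _ hl hl2) hsu
        split_ifs <;> omega
    · rw [rk_inr' hbx]
      simp only [rk]
      have := hle s hs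
      split_ifs <;> omega
  · obtain ⟨ha, hs, u, hu, hp, hl, hl'⟩ := hg
    obtain ⟨v, hv, rfl⟩ := hxA.2.2 _ ⟨u, hu, rfl⟩ _ hl
    have hl2 := reflects hS hσ.1 hx hv hu hl
    rw [rk_inr hσ hx hv]
    simp only [rk]
    by_cases hsu : v = s'
    · subst hsu
      have : v = u := hS.2.2.1 _ _ hl2 hl'
      subst this
      simp [hp]
    · have := ncard_lt hS (hS.2.1 _ _ _ hl2 hl') hsu
      split_ifs <;> omega
  · obtain ⟨ha, hb, hl⟩ := hg
    have hab : a ≠ b := fun h => hne (by rw [h])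
    by_cases hbx : b ∈ σ '' x
    · obtain ⟨u, hu, rfl⟩ := hbx
      obtain ⟨v, hv, rfl⟩ := hxA.2.2 _ ⟨u, hu, rfl⟩ _ hl
      rw [rk_inr hσ hx hv, rk_inr hσ hx hu]
      have := ncard_lt hS (reflects hS hσ.1 hx hv hu hl) (fun h => hab (by rw [h]))
      split_ifs <;> omega
    · rw [rk_inr' hbx]
      by_cases hax : a ∈ σ '' x
      · obtain ⟨v, hv, rfl⟩ := hax
        rw [rk_inr hσ hx hv]
        have := hle v hv
        split_ifs <;> omega
      · rw [rk_inr' hax]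
        have := ncard_lt hA hl hab
        omega

theorem secured (hA : A.toES.IsES) (hS : S.toES.IsES) (hσ : IsPreStrategy S A σ)
    {x : Set S.Evt} {y : Set A.Evt} (h : II A S σ x y) :
    SecuredOn (S.toES.par A.toES) (CC A).toES (ccGraph A S σ x y) := by
  have key : ∀ p q, Relation.ReflTransGen
      (gRel (S.toES.par A.toES) (CC A).toES (ccGraph A S σ x y)) p q →
      p = q ∨ rk A S σ x p.1 < rk A S σ x q.1 := by
    intro p q hpq
    induction hpq with
    | refl => exact Or.inl rfl
    | tail _ hst ih =>
      have h3 := gstep hA hS hσ h hst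
      have h4 := rk_lt hA hS hσ h h3.1 h3.2
      rcases ih with rfl | ih
      · exact Or.inr h4
      · exact Or.inr (ih.trans h4)
  intro p q h1 h2
  rcases key p q h1 with h3 | h3
  · exact h3
  · rcases key q p h2 with h4 | h4
    · exact h4.symm
    · exact absurd (h3.trans h4) (lt_irrefl _)

theorem pre_inl {α β : Type} (x : Set α) (y : Set β) :
    Sum.inl ⁻¹' (Sum.inl '' x ∪ Sum.inr '' y : Set (α ⊕ β)) = x := by
  ext; simp

theorem pre_inr {α β : Type} (x : Set α) (y : Set β) :
    Sum.inr ⁻¹' (Sum.inl '' x ∪ Sum.inr '' y : Set (α ⊕ β)) = y := by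
  ext; simp

abbrev SB (A S : ESP) (σ : S.Evt → A.Evt) (G : Set ((S.Evt ⊕ A.Evt) × (A.Evt ⊕ A.Evt))) : Prop :=
  IsSecBij (S.toES.par A.toES) (CC A).toES (A.toES.par A.toES) (Sum.map σ id) id G

theorem SB_of_II (hA : A.toES.IsES) (hS : S.toES.IsES) (hσ : IsPreStrategy S A σ)
    {x : Set S.Evt} {y : Set A.Evt} (h : II A S σ x y) : SB A S σ (ccGraph A S σ x y) := by
  have hsec := secured hA hS hσ h
  obtain ⟨hx, hy, h1, h2⟩ := h
  have hxA := hσ.1.1 x hx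
  refine ⟨?_, ?_, fun p hp => hp.2.symm, ?_, ?_, hsec⟩
  · have e := fst_ccGraph (A := A) (S := S) (σ := σ) x y
    refine par_cfg.2 ⟨?_, ?_⟩
    · erw [e, pre_inl]; exact hx
    · erw [e, pre_inr]; exact hy
  · have e := snd_ccGraph (A := A) (S := S) (σ := σ) x y
    have hd : ∀ q q' : A.Evt ⊕ A.Evt, Relation.ReflTransGen (ccGen A) q q' →
        q' ∈ (Sum.inl '' (σ '' x) ∪ Sum.inr '' y : Set (A.Evt ⊕ A.Evt)) →
        q ∈ (Sum.inl '' (σ '' x) ∪ Sum.inr '' y : Set (A.Evt ⊕ A.Evt)) := by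
      intro q q' hqq' hq'
      have hD := ccD_of_le hA hqq'
      rcases hq' with ⟨b, hb, rfl⟩ | ⟨b, hb, rfl⟩ <;> rcases q with a | a
      · exact Or.inl ⟨a, hxA.2.2 _ hb _ hD, rfl⟩
      · obtain ⟨c, hc, hac, hcb⟩ := hD
        obtain ⟨s, hs, rfl⟩ := hxA.2.2 _ hb _ hcb
        exact Or.inr ⟨a, hy.2.2 _ (h2 s hs hc) _ hac, rfl⟩
      · obtain ⟨c, hc, hac, hcb⟩ := hD
        exact Or.inl ⟨a, hxA.2.2 _ (h1 c (hy.2.2 _ hb _ hcb) hc) _ hac, rfl⟩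
      · exact Or.inr ⟨a, hy.2.2 _ hb _ hD, rfl⟩
    have hfin : (Sum.inl '' (σ '' x) ∪ Sum.inr '' y : Set (A.Evt ⊕ A.Evt)).Finite :=
      (hxA.1.image _).union (hy.1.image _)
    have goal : (CC A).toES.Config (Sum.inl '' (σ '' x) ∪ Sum.inr '' y : Set (A.Evt ⊕ A.Evt)) := by
      refine ⟨hfin, fun Y hY hYf => ?_, fun e he e' h => hd e' e h he⟩
      have hsub : {e | ∃ e' ∈ Y, Relation.ReflTransGen (ccGen A) e e'} ⊆
          (Sum.inl '' (σ '' x) ∪ Sum.inr '' y : Set (A.Evt ⊕ A.Evt)) := by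
        rintro e ⟨e', he', hl⟩
        exact hd e e' hl (hY he')
      refine ⟨?_, ?_⟩
      · have hs := Set.preimage_mono (f := Sum.inl) hsub
        rw [pre_inl] at hs
        exact hxA.2.1 _ hs (hxA.1.subset hs)
      · have hs := Set.preimage_mono (f := Sum.inr) hsub
        rw [pre_inr] at hs
        exact hy.2.1 _ hs (hy.1.subset hs)
    exact (congrArg (CC A).toES.Config e).mpr goal
  · rintro s ⟨p, hp, rfl⟩ t _ hst
    exact ⟨hp.1, hst.symm⟩
  · ext e
    constructor
    · rintro ⟨_, ⟨p, hp, rfl⟩, rfl⟩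
      exact ⟨_, ⟨p, hp, rfl⟩, hp.2⟩
    · rintro ⟨_, ⟨p, hp, rfl⟩, rfl⟩
      exact ⟨_, ⟨p, hp, rfl⟩, hp.2.symm⟩

def toX (A S : ESP) (G : Set ((S.Evt ⊕ A.Evt) × (A.Evt ⊕ A.Evt))) : Set S.Evt :=
  Sum.inl ⁻¹' (Prod.fst '' G)

def toY (A S : ESP) (G : Set ((S.Evt ⊕ A.Evt) × (A.Evt ⊕ A.Evt))) : Set A.Evt :=
  Sum.inr ⁻¹' (Prod.fst '' G)

theorem toX_ccGraph (x : Set S.Evt) (y : Set A.Evt) : toX A S (ccGraph A S σ x y) = x := by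
  rw [toX, fst_ccGraph, pre_inl]

theorem toY_ccGraph (x : Set S.Evt) (y : Set A.Evt) : toY A S (ccGraph A S σ x y) = y := by
  rw [toY, fst_ccGraph, pre_inr]

theorem SB_eq {G : Set ((S.Evt ⊕ A.Evt) × (A.Evt ⊕ A.Evt))} (h : SB A S σ G) :
    G = ccGraph A S σ (toX A S G) (toY A S G) := by
  have h3 := h.2.2.1
  ext ⟨p, q⟩
  constructor
  · intro hp
    have := h3 _ hp
    rcases p with s | a
    · exact mem_ccGraph_inl.2 ⟨⟨_, hp, rfl⟩, this.symm⟩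
    · exact mem_ccGraph_inr.2 ⟨⟨_, hp, rfl⟩, this.symm⟩
  · intro hp
    have hq := hp.2
    have : p ∈ Prod.fst '' G := by
      rcases p with s | a
      · exact (mem_ccGraph_inl.1 hp).1
      · exact (mem_ccGraph_inr.1 hp).1
    obtain ⟨⟨p', q'⟩, hpq, rfl⟩ := this
    have := h3 _ hpq
    simp only [id] at this hq
    rw [hq, this]; exact hpq

theorem II_of_SB {G : Set ((S.Evt ⊕ A.Evt) × (A.Evt ⊕ A.Evt))} (h : SB A S σ G) :
    II A S σ (toX A S G) (toY A S G) := by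
  have hG := SB_eq h
  obtain ⟨hx, hy⟩ := par_cfg.1 h.1
  have hd := h.2.1.2.2
  have h3 := h.2.2.1
  refine ⟨hx, hy, ?_, ?_⟩
  · intro a ha hp
    have ha' : ((Sum.inr a, Sum.inr a) : (S.Evt ⊕ A.Evt) × (A.Evt ⊕ A.Evt)) ∈ G := by
      rw [hG]; exact mem_ccGraph_inr.2 ⟨ha, rfl⟩
    obtain ⟨⟨p | p, q⟩, hp', hq⟩ := hd (Sum.inr a) ⟨_, ha', rfl⟩ (Sum.inl a)
      (Relation.ReflTransGen.single (Or.inr (Or.inl ⟨a, hp, rfl, rfl⟩)))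
    · have e := (h3 _ hp').trans hq
      exact ⟨p, ⟨_, hp', rfl⟩, Sum.inl_injective e⟩
    · have e := (h3 _ hp').trans hq
      exact absurd e (by simp)
  · intro s hs hp
    have ha' : ((Sum.inl s, Sum.inl (σ s)) : (S.Evt ⊕ A.Evt) × (A.Evt ⊕ A.Evt)) ∈ G := by
      rw [hG]; exact mem_ccGraph_inl.2 ⟨hs, rfl⟩
    obtain ⟨⟨p | p, q⟩, hp', hq⟩ := hd (Sum.inl (σ s)) ⟨_, ha', rfl⟩ (Sum.inr (σ s))
      (Relation.ReflTransGen.single (Or.inr (Or.inr ⟨σ s, hp, rfl, rfl⟩)))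
    · have e := (h3 _ hp').trans hq
      exact absurd e (by simp)
    · have e : p = σ s := Sum.inr_injective ((h3 _ hp').trans hq)
      exact ⟨_, hp', by rw [e]⟩

end
end SC

namespace SC
section
variable {A S : ESP} {σ : S.Evt → A.Evt}

abbrev GG (A S : ESP) : Type := Set ((S.Evt ⊕ A.Evt) × (A.Evt ⊕ A.Evt))

abbrev gr (A S : ESP) (G : GG A S) := gRel (S.toES.par A.toES) (CC A).toES G

theorem sub_eq {x : Set S.Evt} {y : Set A.Evt} {H : GG A S} (h : H ⊆ ccGraph A S σ x y) :
    H = ccGraph A S σ (toX A S H) (toY A S H) := by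
  ext ⟨p, q⟩
  constructor
  · intro hp
    have := (h hp).2
    rcases p with s | a
    · exact mem_ccGraph_inl.2 ⟨⟨_, hp, rfl⟩, this⟩
    · exact mem_ccGraph_inr.2 ⟨⟨_, hp, rfl⟩, this⟩
  · intro hp
    have hq : q = Sum.map σ id p := hp.2
    have : p ∈ Prod.fst '' H := by
      rcases p with s | a
      · exact (mem_ccGraph_inl.1 hp).1
      · exact (mem_ccGraph_inr.1 hp).1
    obtain ⟨⟨p', q'⟩, hpq, rfl⟩ := this
    have : q' = Sum.map σ id p' := (h hpq).2
    rw [hq]; rw [this] at hpq; exact hpq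

theorem mem_toX {x : Set S.Evt} {y : Set A.Evt} {H : GG A S} (h : H ⊆ ccGraph A S σ x y)
    {s : S.Evt} (hs : s ∈ toX A S H) : s ∈ x ∧ (Sum.inl s, Sum.inl (σ s)) ∈ H := by
  have : ((Sum.inl s, Sum.inl (σ s)) : (S.Evt ⊕ A.Evt) × (A.Evt ⊕ A.Evt)) ∈ H := by
    rw [sub_eq h]; exact mem_ccGraph_inl.2 ⟨hs, rfl⟩
  exact ⟨(mem_ccGraph_inl.1 (h this)).1, this⟩

theorem mem_toY {x : Set S.Evt} {y : Set A.Evt} {H : GG A S} (h : H ⊆ ccGraph A S σ x y)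
    {a : A.Evt} (hs : a ∈ toY A S H) : a ∈ y ∧ (Sum.inr a, Sum.inr a) ∈ H := by
  have : ((Sum.inr a, Sum.inr a) : (S.Evt ⊕ A.Evt) × (A.Evt ⊕ A.Evt)) ∈ H := by
    rw [sub_eq h]; exact mem_ccGraph_inr.2 ⟨hs, rfl⟩
  exact ⟨(mem_ccGraph_inr.1 (h this)).1, this⟩

theorem II_of_closed {x : Set S.Evt} {y : Set A.Evt} (h : II A S σ x y) {H : GG A S}
    (hH : H ⊆ ccGraph A S σ x y)
    (hcl : ∀ p q, gr A S (ccGraph A S σ x y) p q → q ∈ H → p ∈ H) :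
    II A S σ (toX A S H) (toY A S H) := by
  obtain ⟨hx, hy, h1, h2⟩ := h
  refine ⟨?_, ?_, ?_, ?_⟩
  · refine cfg_sub hx (fun s hs => (mem_toX hH hs).1) ?_
    intro s hs s' hl
    obtain ⟨hsx, hsH⟩ := mem_toX hH hs
    by_cases he : s' = s
    · rw [he]; exact hs
    · refine ⟨_, hcl (Sum.inl s', Sum.inl (σ s')) _ ⟨mem_ccGraph_inl.2
        ⟨hx.2.2 _ hsx _ hl, rfl⟩, hH hsH, Or.inl ⟨hl, ?_⟩⟩ hsH, rfl⟩
      exact fun h => he (Sum.inl_injective h)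
  · refine cfg_sub hy (fun s hs => (mem_toY hH hs).1) ?_
    intro s hs s' hl
    obtain ⟨hsx, hsH⟩ := mem_toY hH hs
    by_cases he : s' = s
    · rw [he]; exact hs
    · refine ⟨_, hcl (Sum.inr s', Sum.inr s') _ ⟨mem_ccGraph_inr.2
        ⟨hy.2.2 _ hsx _ hl, rfl⟩, hH hsH, Or.inl ⟨hl, ?_⟩⟩ hsH, rfl⟩
      exact fun h => he (Sum.inr_injective h)
  · intro a ha hp
    obtain ⟨hay, haH⟩ := mem_toY hH ha
    obtain ⟨s, hs, rfl⟩ := h1 a hay hp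
    refine ⟨s, ⟨_, hcl (Sum.inl s, Sum.inl (σ s)) _ ⟨mem_ccGraph_inl.2
        ⟨hs, rfl⟩, hH haH, Or.inr ⟨?_, ?_⟩⟩ haH, rfl⟩, rfl⟩
    · exact Relation.ReflTransGen.single (Or.inr (Or.inl ⟨_, hp, rfl, rfl⟩))
    · exact Sum.inl_ne_inr
  · intro s hs hp
    obtain ⟨hsx, hsH⟩ := mem_toX hH hs
    refine ⟨_, hcl (Sum.inr (σ s), Sum.inr (σ s)) _ ⟨mem_ccGraph_inr.2
        ⟨h2 s hsx hp, rfl⟩, hH hsH, Or.inr ⟨?_, ?_⟩⟩ hsH, rfl⟩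
    · exact Relation.ReflTransGen.single (Or.inr (Or.inr ⟨_, hp, rfl, rfl⟩))
    · exact Sum.inr_ne_inl

theorem closed_of_SB (hσ : IsPreStrategy S A σ) {x : Set S.Evt} {y : Set A.Evt}
    (h : II A S σ x y) {H : GG A S} (hSB : SB A S σ H) (hH : H ⊆ ccGraph A S σ x y) :
    ∀ p q, gr A S (ccGraph A S σ x y) p q → q ∈ H → p ∈ H := by
  have hinj : ∀ p q, p ∈ ccGraph A S σ x y → q ∈ ccGraph A S σ x y → p.2 = q.2 → p = q := by
    rintro ⟨p1 | p1, p2⟩ ⟨q1 | q1, q2⟩ hp hq he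
    · replace hp := mem_ccGraph_inl.1 hp; obtain ⟨hp, rfl⟩ := hp
      replace hq := mem_ccGraph_inl.1 hq; obtain ⟨hq, rfl⟩ := hq
      rw [hσ.1.2 x h.1 hp hq (Sum.inl_injective he)]
    · replace hp := mem_ccGraph_inl.1 hp; obtain ⟨hp, rfl⟩ := hp
      replace hq := mem_ccGraph_inr.1 hq; obtain ⟨hq, rfl⟩ := hq
      exact absurd he (by simp)
    · replace hp := mem_ccGraph_inr.1 hp; obtain ⟨hp, rfl⟩ := hp
      replace hq := mem_ccGraph_inl.1 hq; obtain ⟨hq, rfl⟩ := hq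
      exact absurd he (by simp)
    · replace hp := mem_ccGraph_inr.1 hp; obtain ⟨hp, rfl⟩ := hp
      replace hq := mem_ccGraph_inr.1 hq; obtain ⟨hq, rfl⟩ := hq
      rw [Sum.inr_injective he]
  rintro p q ⟨hp, hq, hlt | hlt⟩ hqH
  · obtain ⟨p', hp', he⟩ := hSB.1.2.2 q.1 ⟨q, hqH, rfl⟩ p.1 hlt.1
    have : p' = p := Prod.ext he (by rw [(hH hp').2, hp.2, he])
    exact this ▸ hp'
  · obtain ⟨p', hp', he⟩ := hSB.2.1.2.2 q.2 ⟨q, hqH, rfl⟩ p.2 hlt.1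
    exact hinj p' p (hH hp') hp he ▸ hp'

theorem chain_closed {G H : GG A S} (hcl : ∀ p q, gr A S G p q → q ∈ H → p ∈ H)
    {p q} (h : Relation.ReflTransGen (gr A S G) p q) (hq : q ∈ H) :
    p ∈ H ∧ Relation.ReflTransGen (gr A S H) p q := by
  induction h using Relation.ReflTransGen.head_induction_on with
  | refl => exact ⟨hq, Relation.ReflTransGen.refl⟩
  | head hst _ ih =>
    have := hcl _ _ hst ih.1
    exact ⟨this, Relation.ReflTransGen.head ⟨this, ih.1, hst.2.2⟩ ih.2⟩

theorem chain_mono {G H : GG A S} (hGH : G ⊆ H)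
    {p q} (h : Relation.ReflTransGen (gr A S G) p q) :
    Relation.ReflTransGen (gr A S H) p q :=
  Relation.ReflTransGen.mono (fun _ _ h => ⟨hGH h.1, hGH h.2.1, h.2.2⟩) _ _ h

abbrev TE (A S : ESP) (σ : S.Evt → A.Evt) : Type := (ccCompES A S σ).Evt

def ug (t : TE A S σ) : GG A S := t.val.val

theorem ug_SB (t : TE A S σ) : SB A S σ (ug t) := t.val.prop.1

theorem ug_inj {t t' : TE A S σ} (h : ug t = ug t') : t = t' := Subtype.ext (Subtype.ext h)

theorem lab_mem (t : TE A S σ) :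
    ((Sum.inr (ccCompLabel A S σ t), Sum.inr (ccCompLabel A S σ t)) :
      (S.Evt ⊕ A.Evt) × (A.Evt ⊕ A.Evt)) ∈ ug t :=
  (Exists.choose_spec (t.prop : ccVis A S σ t.val)).1

theorem lab_top (t : TE A S σ) : ∀ q ∈ ug t, Relation.ReflTransGen (gr A S (ug t)) q
    (Sum.inr (ccCompLabel A S σ t), Sum.inr (ccCompLabel A S σ t)) :=
  (Exists.choose_spec (t.prop : ccVis A S σ t.val)).2

theorem vis_exists (hA : A.toES.IsES) (hS : S.toES.IsES) (hσ : IsPreStrategy S A σ)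
    {x : Set S.Evt} {y : Set A.Evt} (h : II A S σ x y) {a : A.Evt} (ha : a ∈ y) :
    ∃ t : TE A S σ, ug t ⊆ ccGraph A S σ x y ∧ ccCompLabel A S σ t = a := by
  have hcl : ∀ p q, gr A S (ccGraph A S σ x y) p q →
      q ∈ {p | p ∈ ccGraph A S σ x y ∧ Relation.ReflTransGen
        (gr A S (ccGraph A S σ x y)) p (Sum.inr a, Sum.inr a)} →
      p ∈ {p | p ∈ ccGraph A S σ x y ∧ Relation.ReflTransGen
        (gr A S (ccGraph A S σ x y)) p (Sum.inr a, Sum.inr a)} :=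
    fun p q hpq hq => ⟨hpq.1, Relation.ReflTransGen.head hpq hq.2⟩
  have hsub : {p | p ∈ ccGraph A S σ x y ∧ Relation.ReflTransGen
        (gr A S (ccGraph A S σ x y)) p (Sum.inr a, Sum.inr a)} ⊆ ccGraph A S σ x y :=
    fun p hp => hp.1
  have hmem : ((Sum.inr a, Sum.inr a) : (S.Evt ⊕ A.Evt) × (A.Evt ⊕ A.Evt)) ∈
      {p | p ∈ ccGraph A S σ x y ∧ Relation.ReflTransGen
        (gr A S (ccGraph A S σ x y)) p (Sum.inr a, Sum.inr a)} :=
    ⟨mem_ccGraph_inr.2 ⟨ha, rfl⟩, Relation.ReflTransGen.refl⟩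
  generalize hH : {p | p ∈ ccGraph A S σ x y ∧ Relation.ReflTransGen
        (gr A S (ccGraph A S σ x y)) p (Sum.inr a, Sum.inr a)} = H at *
  have hSB : SB A S σ H := by
    have := SB_of_II hA hS hσ (II_of_closed h hsub hcl)
    rwa [← sub_eq hsub] at this
  have htop : ∀ q ∈ H, Relation.ReflTransGen (gr A S H) q (Sum.inr a, Sum.inr a) := by
    intro q hq
    have hq2 := hq
    rw [← hH] at hq2
    exact (chain_closed hcl hq2.2 hmem).2
  refine ⟨⟨⟨H, hSB, _, hmem, htop⟩, a, hmem, htop⟩, hsub, ?_⟩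
  generalize ht : (⟨⟨H, hSB, _, hmem, htop⟩, a, hmem, htop⟩ : TE A S σ) = t
  have hu : ug t = H := by rw [← ht]; rfl
  have h1 := lab_mem t
  have h2 := lab_top t
  rw [hu] at h1 h2
  have := hSB.2.2.2.2.2 _ _ (htop _ h1) (h2 _ hmem)
  exact Sum.inr_injective (congrArg Prod.fst this)

def toU (z : Set (TE A S σ)) : GG A S := ⋃ t ∈ z, ug t

def frG (σ : S.Evt → A.Evt) (G : GG A S) : Set (TE A S σ) := {t | ug t ⊆ G}

theorem toU_eq (z : Set (TE A S σ)) :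
    (⋃ G ∈ (Subtype.val '' z : Set (ccInterES A S σ).Evt), G.val) = toU z := by
  ext p
  constructor
  · intro hp
    obtain ⟨_, ⟨t, ht, rfl⟩, hpt⟩ := Set.mem_iUnion₂.1 hp
    exact Set.mem_iUnion₂.2 ⟨t, ht, hpt⟩
  · intro hp
    obtain ⟨t, ht, hpt⟩ := Set.mem_iUnion₂.1 hp
    exact Set.mem_iUnion₂.2 ⟨_, ⟨t, ht, rfl⟩, hpt⟩

theorem toU_SB {z : Set (TE A S σ)} (hz : (ccCompES A S σ).Config z) : SB A S σ (toU z) := by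
  have h := hz.2.1 z subset_rfl hz.1
  exact (congrArg (SB A S σ) (toU_eq z)).mp h.2

theorem frG_config (hA : A.toES.IsES) (hS : S.toES.IsES) (hσ : IsPreStrategy S A σ)
    {x : Set S.Evt} {y : Set A.Evt} (h : II A S σ x y) :
    (ccCompES A S σ).Config (frG σ (ccGraph A S σ x y)) := by
  refine ⟨?_, ?_, ?_⟩
  · have hfin : (ccGraph A S σ x y).Finite := by
      refine Set.Finite.subset (((h.1.1.image Sum.inl).union (h.2.1.1.image Sum.inr)).image
        (fun e => (e, Sum.map σ id e))) ?_
      rintro ⟨p, q⟩ hp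
      exact ⟨p, hp.1, Prod.ext rfl hp.2.symm⟩
    refine Set.Finite.of_finite_image (f := ug) (hfin.finite_subsets.subset ?_)
      (fun t _ t' _ h => ug_inj h)
    rintro _ ⟨t, ht, rfl⟩
    exact ht
  · intro Y hY hYf
    refine ⟨hYf.image _, ?_⟩
    refine (congrArg (SB A S σ) (toU_eq Y)).mpr ?_
    have hsub : toU Y ⊆ ccGraph A S σ x y := Set.iUnion₂_subset (fun t ht => hY ht)
    have hcl : ∀ p q, gr A S (ccGraph A S σ x y) p q → q ∈ toU Y → p ∈ toU Y := by
      intro p q hpq hq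
      obtain ⟨t, ht, hqt⟩ := Set.mem_iUnion₂.1 hq
      exact Set.mem_iUnion₂.2 ⟨t, ht, closed_of_SB hσ h (ug_SB t) (hY ht) p q hpq hqt⟩
    have := SB_of_II hA hS hσ (II_of_closed h hsub hcl)
    rw [← sub_eq hsub] at this
    exact this
  · intro t ht t' hl
    exact Set.Subset.trans hl ht

theorem vis_sub (hσ : IsPreStrategy S A σ) {x : Set S.Evt} {y : Set A.Evt}
    (h : II A S σ x y) {t t' : TE A S σ} (ht : ug t ⊆ ccGraph A S σ x y)
    (ht' : ug t' ⊆ ccGraph A S σ x y)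
    (hm : ((Sum.inr (ccCompLabel A S σ t), Sum.inr (ccCompLabel A S σ t)) :
      (S.Evt ⊕ A.Evt) × (A.Evt ⊕ A.Evt)) ∈ ug t') : ug t ⊆ ug t' := by
  intro q hq
  exact (chain_closed (closed_of_SB hσ h (ug_SB t') ht') (chain_mono ht (lab_top t q hq)) hm).1

theorem toU_MM (hA : A.toES.IsES) (hS : S.toES.IsES) (hσ : IsPreStrategy S A σ)
    {z : Set (TE A S σ)} (hz : (ccCompES A S σ).Config z) :
    MM A S σ (toX A S (toU z)) (toY A S (toU z)) := by
  have hSB := toU_SB hz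
  have hI := II_of_SB hSB
  have hG := SB_eq hSB
  intro s hs
  obtain ⟨⟨p, q⟩, hp, rfl⟩ := hs
  obtain ⟨t, ht, hpt⟩ := Set.mem_iUnion₂.1 hp
  have hch := lab_top t _ hpt
  have hsub : ug t ⊆ toU z := fun q hq => Set.mem_iUnion₂.2 ⟨t, ht, hq⟩
  have hch2 := chain_mono hsub hch
  rw [hG] at hch2
  generalize toX A S (toU z) = x at *
  generalize toY A S (toU z) = y at *
  have key : ∀ p, Relation.ReflTransGen (gr A S (ccGraph A S σ x y)) p
      (Sum.inr (ccCompLabel A S σ t), Sum.inr (ccCompLabel A S σ t)) →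
      ∀ s, p.1 = Sum.inl s → ∃ s' ∈ x, S.le s s' ∧ S.pol s' = true ∧ σ s' ∈ y := by
    intro p hp
    induction hp using Relation.ReflTransGen.head_induction_on with
    | refl => intro s hs; exact absurd hs (by simp)
    | @head p q hst _ ih =>
      intro s hs
      obtain ⟨_, hD⟩ := gstep hA hS hσ hI hst
      obtain ⟨q1, q2⟩ := q
      rw [hs] at hD
      rcases q1 with s1 | b
      · obtain ⟨s', h1, h2, h3⟩ := ih s1 rfl
        exact ⟨s', h1, hS.2.1 _ _ _ hD.2.2 h2, h3⟩
      · obtain ⟨h1, h2, s', h3, h4, h5, h6⟩ := hD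
        exact ⟨s', h3, h5, h4, hI.2.1.2.2 _ h2 _ h6⟩
  exact key _ hch2 s rfl

theorem frG_toU (hσ : IsPreStrategy S A σ)
    {z : Set (TE A S σ)} (hz : (ccCompES A S σ).Config z) : frG σ (toU z) = z := by
  have hSB := toU_SB hz
  have hI := II_of_SB hSB
  have hG := SB_eq hSB
  have hsub : ∀ t ∈ z, ug t ⊆ toU z := fun t ht q hq => Set.mem_iUnion₂.2 ⟨t, ht, hq⟩
  apply Set.Subset.antisymm
  · intro t ht
    obtain ⟨t', ht', hm⟩ := Set.mem_iUnion₂.1 (ht (lab_mem t))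
    refine hz.2.2 t' ht' t ?_
    exact vis_sub hσ hI (hG ▸ ht) (hG ▸ hsub t' ht') hm
  · exact hsub

theorem toU_frG (hA : A.toES.IsES) (hS : S.toES.IsES) (hσ : IsPreStrategy S A σ)
    {x : Set S.Evt} {y : Set A.Evt} (h : II A S σ x y) (hM : MM A S σ x y) :
    toU (frG σ (ccGraph A S σ x y)) = ccGraph A S σ x y := by
  apply Set.Subset.antisymm
  · exact Set.iUnion₂_subset (fun t ht => ht)
  · rintro ⟨s | a, q⟩ hp
    · obtain ⟨hs, rfl⟩ := mem_ccGraph_inl.1 hp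
      obtain ⟨s', hs', hl, hpol, hy⟩ := hM s hs
      obtain ⟨t, ht, hta⟩ := vis_exists hA hS hσ h hy
      refine Set.mem_iUnion₂.2 ⟨t, ht, ?_⟩
      have hm := lab_mem t
      rw [hta] at hm
      have hcl := closed_of_SB hσ h (ug_SB t) ht
      have h1 : ((Sum.inl s', Sum.inl (σ s')) : (S.Evt ⊕ A.Evt) × (A.Evt ⊕ A.Evt)) ∈ ug t := by
        refine hcl _ _ ⟨mem_ccGraph_inl.2 ⟨hs', rfl⟩, ht hm, Or.inr ⟨?_, ?_⟩⟩ hm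
        · exact Relation.ReflTransGen.single
            (Or.inr (Or.inl ⟨_, by rw [hσ.2]; exact hpol, rfl, rfl⟩))
        · exact Sum.inl_ne_inr
      by_cases he : s = s'
      · subst he; exact h1
      · refine hcl _ _ ⟨hp, ht h1, Or.inl ⟨hl, ?_⟩⟩ h1
        exact fun h => he (Sum.inl_injective h)
    · obtain ⟨ha, rfl⟩ := mem_ccGraph_inr.1 hp
      obtain ⟨t, ht, hta⟩ := vis_exists hA hS hσ h ha
      have hm := lab_mem t
      rw [hta] at hm
      exact Set.mem_iUnion₂.2 ⟨t, ht, hm⟩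

theorem lab_image (hA : A.toES.IsES) (hS : S.toES.IsES) (hσ : IsPreStrategy S A σ)
    {z : Set (TE A S σ)} (hz : (ccCompES A S σ).Config z) :
    ccCompLabel A S σ '' z = toY A S (toU z) := by
  have hSB := toU_SB hz
  have hI := II_of_SB hSB
  have hG := SB_eq hSB
  apply Set.Subset.antisymm
  · rintro _ ⟨t, ht, rfl⟩
    exact ⟨_, Set.mem_iUnion₂.2 ⟨t, ht, lab_mem t⟩, rfl⟩
  · intro a ha
    obtain ⟨t, ht, hta⟩ := vis_exists hA hS hσ hI ha
    rw [← hG] at ht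
    have : t ∈ frG σ (toU z) := ht
    rw [frG_toU hσ hz] at this
    exact ⟨t, this, hta⟩

theorem lab_inj (hσ : IsPreStrategy S A σ)
    {z : Set (TE A S σ)} (hz : (ccCompES A S σ).Config z) : Set.InjOn (ccCompLabel A S σ) z := by
  have hSB := toU_SB hz
  have hI := II_of_SB hSB
  have hG := SB_eq hSB
  have hsub : ∀ t ∈ z, ug t ⊆ toU z := fun t ht q hq => Set.mem_iUnion₂.2 ⟨t, ht, hq⟩
  rw [hG] at hsub
  intro t ht t' ht' he
  apply ug_inj
  apply Set.Subset.antisymm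
  · exact vis_sub hσ hI (hsub t ht) (hsub t' ht') (by rw [he]; exact lab_mem t')
  · exact vis_sub hσ hI (hsub t' ht') (hsub t ht) (by rw [← he]; exact lab_mem t)

theorem comp_prin (hA : A.toES.IsES) (hS : S.toES.IsES) (hσ : IsPreStrategy S A σ)
    (t : TE A S σ) : (ccCompES A S σ).Config {t' | (ccCompES A S σ).le t' t} := by
  have h := frG_config hA hS hσ (II_of_SB (ug_SB t))
  rw [← SB_eq (ug_SB t)] at h
  exact h

theorem toU_mono {z z' : Set (TE A S σ)} (h : z ⊆ z') : toU z ⊆ toU z' :=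
  Set.biUnion_subset_biUnion_left h

theorem toX_mono {G H : GG A S} (h : G ⊆ H) : toX A S G ⊆ toX A S H :=
  Set.preimage_mono (Set.image_mono h)

theorem toY_mono {G H : GG A S} (h : G ⊆ H) : toY A S G ⊆ toY A S H :=
  Set.preimage_mono (Set.image_mono h)

theorem ccGraph_mono {x x' : Set S.Evt} {y y' : Set A.Evt} (h : x ⊆ x') (h' : y ⊆ y') :
    ccGraph A S σ x y ⊆ ccGraph A S σ x' y' := fun _ hp =>
  ⟨Set.union_subset_union (Set.image_mono h) (Set.image_mono h') hp.1, hp.2⟩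

theorem iso_of_cfg {T S A : ESP} {τ : T.Evt → A.Evt} {σ : S.Evt → A.Evt}
    (hT : ∀ t, T.toES.Config {t' | T.le t' t}) (hTr : ∀ t, T.le t t)
    (hS : ∀ t, S.toES.Config {t' | S.le t' t}) (hSr : ∀ t, S.le t t)
    (hτi : ∀ z, T.toES.Config z → Set.InjOn τ z) (hσi : ∀ z, S.toES.Config z → Set.InjOn σ z)
    (Φ : Set T.Evt → Set S.Evt) (Ψ : Set S.Evt → Set T.Evt)
    (hΦ : ∀ z, T.toES.Config z → S.toES.Config (Φ z))
    (hΨ : ∀ x, S.toES.Config x → T.toES.Config (Ψ x))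
    (hΦm : ∀ z z', T.toES.Config z → T.toES.Config z' → z ⊆ z' → Φ z ⊆ Φ z')
    (hΨm : ∀ z z', S.toES.Config z → S.toES.Config z' → z ⊆ z' → Ψ z ⊆ Ψ z')
    (hΦΨ : ∀ x, S.toES.Config x → Φ (Ψ x) = x) (hΨΦ : ∀ z, T.toES.Config z → Ψ (Φ z) = z)
    (himg : ∀ z, T.toES.Config z → σ '' Φ z = τ '' z) : PreStratIso T S A τ σ := by
  have himg' : ∀ x, S.toES.Config x → τ '' Ψ x = σ '' x := by
    intro x hx
    rw [← himg _ (hΨ x hx), hΦΨ x hx]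
  have hf : ∀ t, ∃ s ∈ Φ {t' | T.le t' t}, σ s = τ t := by
    intro t
    have : τ t ∈ σ '' Φ {t' | T.le t' t} := by rw [himg _ (hT t)]; exact ⟨t, hTr t, rfl⟩
    exact this
  have hg : ∀ s, ∃ t ∈ Ψ {s' | S.le s' s}, τ t = σ s := by
    intro s
    have : σ s ∈ τ '' Ψ {s' | S.le s' s} := by rw [himg' _ (hS s)]; exact ⟨s, hSr s, rfl⟩
    exact this
  choose f hf1 hf2 using hf
  choose g hg1 hg2 using hg
  have hfz : ∀ z, T.toES.Config z → f '' z = Φ z := by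
    intro z hz
    have hsub : ∀ t ∈ z, f t ∈ Φ z := fun t ht =>
      hΦm _ z (hT t) hz (fun t' h => hz.2.2 t ht t' h) (hf1 t)
    apply Set.Subset.antisymm
    · rintro _ ⟨t, ht, rfl⟩; exact hsub t ht
    · intro s hs
      have : σ s ∈ τ '' z := by rw [← himg z hz]; exact ⟨s, hs, rfl⟩
      obtain ⟨t, ht, hts⟩ := this
      exact ⟨t, ht, hσi _ (hΦ z hz) (hsub t ht) hs ((hf2 t).trans hts)⟩
  have hgz : ∀ x, S.toES.Config x → g '' x = Ψ x := by
    intro z hz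
    have hsub : ∀ t ∈ z, g t ∈ Ψ z := fun t ht =>
      hΨm _ z (hS t) hz (fun t' h => hz.2.2 t ht t' h) (hg1 t)
    apply Set.Subset.antisymm
    · rintro _ ⟨t, ht, rfl⟩; exact hsub t ht
    · intro s hs
      have : τ s ∈ σ '' z := by rw [← himg' z hz]; exact ⟨s, hs, rfl⟩
      obtain ⟨t, ht, hts⟩ := this
      exact ⟨t, ht, hτi _ (hΨ z hz) (hsub t ht) hs ((hg2 t).trans hts)⟩
  refine ⟨f, g, ⟨fun z hz => by rw [hfz z hz]; exact hΦ z hz, fun z hz t ht t' ht' he => ?_⟩,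
    ⟨fun z hz => by rw [hgz z hz]; exact hΨ z hz, fun z hz t ht t' ht' he => ?_⟩,
    fun t => ?_, fun s => ?_, hf2⟩
  · exact hτi z hz ht ht' (by rw [← hf2, ← hf2, he])
  · exact hσi z hz ht ht' (by rw [← hg2, ← hg2, he])
  · refine hτi _ (hT t) ?_ (hTr t) ((hg2 _).trans (hf2 t))
    have h1 : f t ∈ Φ {t' | T.le t' t} := hf1 t
    have h2 := hΨ _ (hΦ _ (hT t))
    have h3 : g (f t) ∈ Ψ (Φ {t' | T.le t' t}) := by
      rw [← hgz _ (hΦ _ (hT t))]; exact ⟨_, h1, rfl⟩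
    rwa [hΨΦ _ (hT t)] at h3
  · refine hσi _ (hS s) ?_ (hSr s) ((hf2 _).trans (hg2 s))
    have h3 : f (g s) ∈ Φ (Ψ {s' | S.le s' s}) := by
      rw [← hfz _ (hΨ _ (hS s))]; exact ⟨_, hg1 s, rfl⟩
    rwa [hΦΨ _ (hS s)] at h3

theorem scott_II {x : Set S.Evt} {y : Set A.Evt} (h : II A S σ x y) :
    scottLE A.pol y (σ '' x) := by
  rw [scott_iff]
  refine ⟨h.2.2.1, ?_⟩
  rintro _ ⟨s, hs, rfl⟩ hp
  exact h.2.2.2 s hs hp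

theorem lift_mono (hA : A.toES.IsES) (hS : S.toES.IsES) (hσ : IsPreStrategy S A σ)
    (hneg : DiscFibOn S.toES A.toES σ (negLE S.pol) (negLE A.pol))
    (hpos : DiscFibOn S.toES A.toES σ (posLE S.pol) (posLE A.pol))
    {x x1 x' x1' : Set S.Evt} {y y1 : Set A.Evt} (h : II A S σ x y) (h1 : II A S σ x1 y1)
    (hx : x ⊆ x1) (hy : y ⊆ y1) (hx' : S.toES.Config x') (hx1' : S.toES.Config x1')
    (hl : scottLE S.pol x' x) (hl1 : scottLE S.pol x1' x1) (hi : σ '' x' = y)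
    (hi1 : σ '' x1' = y1) : x' ⊆ x1' := by
  have hc := court_of_fib hA hS hσ hneg hpos
  have hsc := scott_of_fib hσ hneg hpos
  rw [scott_iff] at hl1
  have hcom : ∀ s ∈ x1, σ s ∈ y1 → s ∈ x1' := by
    intro s hs hsy
    cases hp : S.pol s
    · exact hl1.2 s hs hp
    · rw [← hi1] at hsy
      obtain ⟨u, hu, hus⟩ := hsy
      have := hl1.1 u hu (by rw [← hσ.2, hus, hσ.2]; exact hp)
      exact hσ.1.2 x1 h1.1 this hs hus ▸ hu
  have hw : S.toES.Config {s | s ∈ x1' ∧ σ s ∈ y} := by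
    refine cfg_sub hx1' (fun s hs => hs.1) (down_of_imc hS ?_)
    rintro s ⟨hs, hsy⟩ s0 himc
    have hs0 := hx1'.2.2 _ hs _ himc.1.1
    refine ⟨hs0, ?_⟩
    by_cases hpol : (S.pol s0, S.pol s) = (false, true)
    · have hp0 : S.pol s0 = false := congrArg Prod.fst hpol
      have hp1 : S.pol s = true := congrArg Prod.snd hpol
      obtain ⟨u, hu, hus⟩ := h.2.2.1 _ hsy (by rw [hσ.2]; exact hp1)
      have hu1 := hcom u (hx hu) (by rw [hus]; exact hy hsy)
      have : u = s := hσ.1.2 _ hx1' hu1 hs hus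
      subst this
      exact h.2.2.2 s0 (h.1.2.2 _ hu _ himc.1.1) (by rw [hσ.2]; exact hp0)
    · exact h.2.1.2.2 _ hsy _ (hc s0 s himc hpol).1.1
  have hwi : σ '' {s | s ∈ x1' ∧ σ s ∈ y} = y := by
    apply Set.Subset.antisymm
    · rintro _ ⟨s, hs, rfl⟩; exact hs.2
    · intro a ha
      have := hy ha
      rw [← hi1] at this
      obtain ⟨s, hs, rfl⟩ := this
      exact ⟨s, ⟨hs, ha⟩, rfl⟩
  have hws : scottLE S.pol {s | s ∈ x1' ∧ σ s ∈ y} x := by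
    rw [scott_iff]
    constructor
    · rintro s ⟨hs, hsy⟩ hp
      obtain ⟨u, hu, hus⟩ := h.2.2.1 _ hsy (by rw [hσ.2]; exact hp)
      have hu1 := hcom u (hx hu) (by rw [hus]; exact hy hsy)
      exact hσ.1.2 _ hx1' hu1 hs hus ▸ hu
    · intro s hs hp
      have := h.2.2.2 s hs (by rw [hσ.2]; exact hp)
      exact ⟨hcom s (hx hs) (hy this), this⟩
  obtain ⟨v, _, hu⟩ := hsc.2 x h.1 y h.2.1 (scott_II h)
  rw [hu x' ⟨hx', hl, hi⟩, ← hu _ ⟨hw, hws, hwi⟩]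
  exact fun s hs => hs.1

def pp (S : ESP) (x : Set S.Evt) : Set S.Evt :=
  {s | s ∈ x ∧ ∃ s' ∈ x, S.le s s' ∧ S.pol s' = true}

theorem pp_cfg (hS : S.toES.IsES) {x : Set S.Evt} (hx : S.toES.Config x) :
    S.toES.Config (pp S x) := by
  refine cfg_sub hx (fun s hs => hs.1) ?_
  rintro s ⟨hs, s', hs', hl, hp⟩ s0 h0
  exact ⟨hx.2.2 _ hs _ h0, s', hs', hS.2.1 _ _ _ h0 hl, hp⟩

theorem pp_II (hS : S.toES.IsES) (hσ : IsPreStrategy S A σ)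
    {x : Set S.Evt} (hx : S.toES.Config x) : II A S σ (pp S x) (σ '' x) := by
  refine ⟨pp_cfg hS hx, hσ.1.1 x hx, ?_, ?_⟩
  · rintro _ ⟨s, hs, rfl⟩ hp
    exact ⟨s, ⟨hs, s, hs, hS.1 s, by rw [← hσ.2]; exact hp⟩, rfl⟩
  · rintro s hs _
    exact ⟨s, hs.1, rfl⟩

theorem pp_MM (hS : S.toES.IsES) {x : Set S.Evt} : MM A S σ (pp S x) (σ '' x) := by
  rintro s ⟨hs, s', hs', hl, hp⟩
  exact ⟨s', ⟨hs', s', hs', hS.1 _, hp⟩, hl, hp, s', hs', rfl⟩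

theorem pp_mono {x x' : Set S.Evt} (h : x ⊆ x') : pp S x ⊆ pp S x' := by
  rintro s ⟨hs, s', hs', hl, hp⟩
  exact ⟨h hs, s', h hs', hl, hp⟩

theorem pp_scott (hS : S.toES.IsES) {x : Set S.Evt} : scottLE S.pol x (pp S x) := by
  rw [scott_iff]
  exact ⟨fun s hs hp => ⟨hs, s, hs, hS.1 s, hp⟩, fun s hs _ => hs.1⟩

theorem pp_lift (hσ : IsPreStrategy S A σ) {x x' : Set S.Evt} {y : Set A.Evt}
    (h : II A S σ x y) (hM : MM A S σ x y) (hx' : S.toES.Config x')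
    (hl : scottLE S.pol x' x) (hi : σ '' x' = y) : pp S x' = x := by
  rw [scott_iff] at hl
  apply Set.Subset.antisymm
  · rintro s ⟨hs, s', hs', hle, hp⟩
    exact h.1.2.2 _ (hl.1 s' hs' hp) _ hle
  · intro s hs
    obtain ⟨s', hs', hle, hp, hy⟩ := hM s hs
    have : s' ∈ x' := by
      rw [← hi] at hy
      obtain ⟨u, hu, hus⟩ := hy
      have := hl.1 u hu (by rw [← hσ.2, hus, hσ.2]; exact hp)
      exact hσ.1.2 x h.1 this hs' hus ▸ hu
    exact ⟨hx'.2.2 _ this _ hle, s', this, hle, hp⟩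

theorem strat_of_fib (hA : A.toES.IsES) (hS : S.toES.IsES) (hσ : IsPreStrategy S A σ)
    (hneg : DiscFibOn S.toES A.toES σ (negLE S.pol) (negLE A.pol))
    (hpos : DiscFibOn S.toES A.toES σ (posLE S.pol) (posLE A.pol)) : IsStrategy S A σ := by
  refine ⟨hσ, ?_⟩
  have hsc := scott_of_fib hσ hneg hpos
  have hL : ∀ x y, ∃ x', II A S σ x y →
      S.toES.Config x' ∧ scottLE S.pol x' x ∧ σ '' x' = y := by
    intro x y
    by_cases h : II A S σ x y
    · obtain ⟨x', hx', _⟩ := hsc.2 x h.1 y h.2.1 (scott_II h)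
      exact ⟨x', fun _ => hx'⟩
    · exact ⟨∅, fun h' => absurd h' h⟩
  choose L hL using hL
  have hII : ∀ z, (ccCompES A S σ).Config z → II A S σ (toX A S (toU z)) (toY A S (toU z)) :=
    fun z hz => II_of_SB (toU_SB hz)
  refine iso_of_cfg (T := ccCompESP A S σ) (comp_prin hA hS hσ) (fun t => subset_rfl)
    (cfg_prin hS) hS.1 (fun z hz => lab_inj hσ hz) hσ.1.2
    (fun z => L (toX A S (toU z)) (toY A S (toU z)))
    (fun x => frG σ (ccGraph A S σ (pp S x) (σ '' x)))
    (fun z hz => (hL _ _ (hII z hz)).1)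
    (fun x hx => frG_config hA hS hσ (pp_II hS hσ hx))
    ?_ ?_ ?_ ?_ ?_
  · intro z z' hz hz' h
    obtain ⟨a1, a2, a3⟩ := hL _ _ (hII z hz)
    obtain ⟨b1, b2, b3⟩ := hL _ _ (hII z' hz')
    exact lift_mono hA hS hσ hneg hpos (hII z hz) (hII z' hz') (toX_mono (toU_mono h))
      (toY_mono (toU_mono h)) a1 b1 a2 b2 a3 b3
  · intro x x' hx hx' h t ht
    exact Set.Subset.trans ht (ccGraph_mono (pp_mono h) (Set.image_mono h))
  · intro x hx
    have hI := pp_II hS hσ hx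
    have e := toU_frG hA hS hσ hI (pp_MM hS)
    show L (toX A S (toU (frG σ (ccGraph A S σ (pp S x) (σ '' x)))))
      (toY A S (toU (frG σ (ccGraph A S σ (pp S x) (σ '' x))))) = x
    rw [e, toX_ccGraph, toY_ccGraph]
    obtain ⟨v, _, hu⟩ := hsc.2 _ hI.1 _ hI.2.1 (scott_II hI)
    rw [hu _ (hL _ _ hI), hu x ⟨hx, pp_scott hS, rfl⟩]
  · intro z hz
    have hI := hII z hz
    obtain ⟨a1, a2, a3⟩ := hL _ _ hI
    have e := pp_lift hσ hI (toU_MM hA hS hσ hz) a1 a2 a3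
    show frG σ (ccGraph A S σ (pp S (L (toX A S (toU z)) (toY A S (toU z))))
      (σ '' L (toX A S (toU z)) (toY A S (toU z)))) = z
    rw [e, a3, ← SB_eq (toU_SB hz)]
    exact frG_toU hσ hz
  · intro z hz
    show σ '' L (toX A S (toU z)) (toY A S (toU z)) = ccCompLabel A S σ '' z
    rw [(hL _ _ (hII z hz)).2.2, lab_image hA hS hσ hz]

end
end SC

namespace SC
section
variable {A S : ESP} {σ : S.Evt → A.Evt}

theorem fib_of_strat (hA : A.toES.IsES) (hS : S.toES.IsES) (hσ : IsPreStrategy S A σ)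
    (h : IsStrategy S A σ) :
    DiscFibOn S.toES A.toES σ (negLE S.pol) (negLE A.pol) ∧
    DiscFibOn S.toES A.toES σ (posLE S.pol) (posLE A.pol) := by
  have h' : ∃ (f : TE A S σ → S.Evt) (g : S.Evt → TE A S σ),
      IsMap (ccCompES A S σ) S.toES f ∧ IsMap S.toES (ccCompES A S σ) g ∧
      (∀ s, g (f s) = s) ∧ (∀ t, f (g t) = t) ∧ ∀ s, σ (f s) = ccCompLabel A S σ s := h.2
  obtain ⟨f, g, hf, hg, hgf, hfg, hlab⟩ := h'
  have hlab' : ∀ s, ccCompLabel A S σ (g s) = σ s := by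
    intro s
    rw [← hlab, hfg]
  have hKR : ∃ (R : Set S.Evt → Set S.Evt) (K : Set S.Evt → Set A.Evt → Set S.Evt),
      (∀ x, S.toES.Config x → II A S σ (R x) (σ '' x) ∧ MM A S σ (R x) (σ '' x)) ∧
      (∀ x y, II A S σ x y → MM A S σ x y →
        S.toES.Config (K x y) ∧ σ '' K x y = y ∧ R (K x y) = x) ∧
      (∀ x, S.toES.Config x → K (R x) (σ '' x) = x) ∧
      (∀ x x', x ⊆ x' → R x ⊆ R x') ∧
      (∀ x x' y y', x ⊆ x' → y ⊆ y' → K x y ⊆ K x' y') := by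
    have hY : ∀ x, S.toES.Config x → toY A S (toU (σ := σ) (g '' x)) = σ '' x := by
      intro x hx
      rw [← lab_image hA hS hσ (hg.1 x hx), Set.image_image]
      simp only [hlab']
    refine ⟨fun x => toX A S (toU (σ := σ) (g '' x)), fun x y => f '' frG σ (ccGraph A S σ x y),
      ?_, ?_, ?_, ?_, ?_⟩
    · intro x hx
      have h1 := II_of_SB (toU_SB (hg.1 x hx))
      have h2 := toU_MM hA hS hσ (hg.1 x hx)
      rw [hY x hx] at h1 h2
      exact ⟨h1, h2⟩
    · intro x y hI hM
      have hc := frG_config hA hS hσ hI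
      have e := toU_frG hA hS hσ hI hM
      refine ⟨hf.1 _ hc, ?_, ?_⟩
      · show σ '' (f '' frG σ (ccGraph A S σ x y)) = y
        rw [Set.image_image]
        simp only [hlab]
        rw [lab_image hA hS hσ hc, e, toY_ccGraph]
      · have e2 : g '' (f '' frG σ (ccGraph A S σ x y)) = frG σ (ccGraph A S σ x y) := by
          rw [Set.image_image]; simp only [hgf]; exact Set.image_id' _
        show toX A S (toU (σ := σ) (g '' (f '' frG σ (ccGraph A S σ x y)))) = x
        rw [e2, e, toX_ccGraph]
    · intro x hx
      have hc := hg.1 x hx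
      show f '' frG σ (ccGraph A S σ (toX A S (toU (σ := σ) (g '' x))) (σ '' x)) = x
      rw [← hY x hx, ← SB_eq (toU_SB hc), frG_toU hσ hc, Set.image_image]
      simp only [hfg]; exact Set.image_id' _
    · intro x x' hx
      exact toX_mono (toU_mono (Set.image_mono hx))
    · intro x x' y y' hx hy
      exact Set.image_mono (fun t ht => Set.Subset.trans ht (ccGraph_mono hx hy))
  obtain ⟨R, K, hR, hK, hKR, hRm, hKm⟩ := hKR
  constructor
  · refine ⟨fun x x' _ _ h => polExt_image hσ h, ?_⟩
    intro x hx y hy hyx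
    obtain ⟨hI, hM⟩ := hR x hx
    have hpy : ∀ a ∈ y, A.pol a = true → a ∈ σ '' x := by
      intro a ha hp
      by_contra hn
      have := hyx.2 a ha hn
      simp [hp] at this
    have hI' : II A S σ (R x) y :=
      ⟨hI.1, hy, fun a ha hp => hI.2.2.1 a (hpy a ha hp) hp,
        fun s hs hp => hyx.1 (hI.2.2.2 s hs hp)⟩
    have hM' : MM A S σ (R x) y := by
      intro s hs
      obtain ⟨s', h1, h2, h3, h4⟩ := hM s hs
      exact ⟨s', h1, h2, h3, hyx.1 h4⟩
    obtain ⟨k1, k2, k3⟩ := hK _ _ hI' hM'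
    refine ⟨K (R x) y, ⟨k1, ?_, k2⟩, ?_⟩
    · refine polExt_of_image hσ k1 ?_ (by rw [k2]; exact hyx)
      have := hKm (R x) (R x) (σ '' x) y subset_rfl hyx.1
      rwa [hKR x hx] at this
    · rintro x2 ⟨g1, g2, g3⟩
      obtain ⟨hI2, hM2⟩ := hR x2 g1
      have hsub := hRm _ _ g2.1
      have e : R x2 = R x := by
        apply Set.Subset.antisymm _ hsub
        intro s hs
        obtain ⟨s', h1, h2, h3, h4⟩ := hM2 s hs
        have hp : A.pol (σ s') = true := by rw [hσ.2]; exact h3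
        rw [g3] at h4
        obtain ⟨u, hu, hus⟩ := hI'.2.2.1 _ h4 hp
        have : u = s' := hσ.1.2 _ hI2.1 (hsub hu) h1 hus
        subst this
        exact hI.1.2.2 _ hu _ h2
      rw [← e, ← g3]
      exact (hKR x2 g1).symm
  · refine ⟨fun x x' _ _ h => polExt_image hσ h, ?_⟩
    intro x hx y hy hyx
    obtain ⟨hI, hM⟩ := hR x hx
    have hny : ∀ a ∈ σ '' x, A.pol a = false → a ∈ y := by
      intro a ha hp
      by_contra hn
      have := hyx.2 a ha hn
      simp [hp] at this
    have hsub1 : {s | s ∈ R x ∧ ∃ s' ∈ R x, S.le s s' ∧ S.pol s' = true ∧ σ s' ∈ y} ⊆ R x :=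
      fun s hs => hs.1
    have hI' : II A S σ {s | s ∈ R x ∧ ∃ s' ∈ R x, S.le s s' ∧ S.pol s' = true ∧ σ s' ∈ y} y := by
      refine ⟨cfg_sub hI.1 hsub1 ?_, hy, ?_, ?_⟩
      · rintro s ⟨hs, s', h1, h2, h3⟩ s0 h0
        exact ⟨hI.1.2.2 _ hs _ h0, s', h1, hS.2.1 _ _ _ h0 h2, h3⟩
      · intro a ha hp
        obtain ⟨s, hs, rfl⟩ := hI.2.2.1 a (hyx.1 ha) hp
        exact ⟨s, ⟨hs, s, hs, hS.1 s, by rw [← hσ.2]; exact hp, ha⟩, rfl⟩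
      · rintro s ⟨hs, _⟩ hp
        exact hny _ (hI.2.2.2 s hs hp) hp
    have hM' : MM A S σ {s | s ∈ R x ∧ ∃ s' ∈ R x, S.le s s' ∧ S.pol s' = true ∧ σ s' ∈ y} y := by
      rintro s ⟨hs, s', h1, h2, h3, h4⟩
      exact ⟨s', ⟨h1, s', h1, hS.1 s', h3, h4⟩, h2, h3, h4⟩
    obtain ⟨k1, k2, k3⟩ := hK _ _ hI' hM'
    refine ⟨_, ⟨k1, ?_, k2⟩, ?_⟩
    · refine polExt_of_image hσ hx ?_ (by rw [k2]; exact hyx)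
      have := hKm _ (R x) y (σ '' x) hsub1 hyx.1
      rwa [hKR x hx] at this
    · rintro x2 ⟨g1, g2, g3⟩
      obtain ⟨hI2, hM2⟩ := hR x2 g1
      have hsub := hRm _ _ g2.1
      rw [g3] at hI2 hM2
      have e : R x2 = {s | s ∈ R x ∧ ∃ s' ∈ R x, S.le s s' ∧ S.pol s' = true ∧ σ s' ∈ y} := by
        apply Set.Subset.antisymm
        · intro s hs
          obtain ⟨s', h1, h2, h3, h4⟩ := hM2 s hs
          exact ⟨hsub hs, s', hsub h1, h2, h3, h4⟩
        · rintro s ⟨hs, s', h1, h2, h3, h4⟩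
          obtain ⟨u, hu, hus⟩ := hI2.2.2.1 _ h4 (by rw [hσ.2]; exact h3)
          have : u = s' := hσ.1.2 _ hI.1 (hsub hu) h1 hus
          subst this
          exact hI2.1.2.2 _ hu _ h2
      rw [← e]
      have := hKR x2 g1
      rw [g3] at this
      exact this.symm

end
end SC

/-- main theorem: for a pre-strategy `σ : S → A`, the
following are equivalent: (i) `σ` is a strategy; (ii) `σ` is a discrete
fibration for `⊇⁻` and for `⊆⁺`; (iii) `σ` is a discrete fibration for the
Scott orders; (iv) `σ` is courteous and receptive. -/
theorem strategy_characterisation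
    (A S : ESP) (hA : A.toES.IsES) (hS : S.toES.IsES)
    (σ : S.Evt → A.Evt) (hσ : IsPreStrategy S A σ) :
    (IsStrategy S A σ ↔
      (DiscFibOn S.toES A.toES σ (negLE S.pol) (negLE A.pol) ∧
       DiscFibOn S.toES A.toES σ (posLE S.pol) (posLE A.pol))) ∧
    (IsStrategy S A σ ↔
      DiscFibOn S.toES A.toES σ (scottLE S.pol) (scottLE A.pol)) ∧
    (IsStrategy S A σ ↔ (Courteous S A σ ∧ Receptive S A σ)) := by
  have h12 : IsStrategy S A σ ↔
      (DiscFibOn S.toES A.toES σ (negLE S.pol) (negLE A.pol) ∧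
       DiscFibOn S.toES A.toES σ (posLE S.pol) (posLE A.pol)) :=
    ⟨SC.fib_of_strat hA hS hσ, fun h => SC.strat_of_fib hA hS hσ h.1 h.2⟩
  refine ⟨h12, h12.trans ⟨fun h => SC.scott_of_fib hσ h.1 h.2, SC.fib_of_scott hσ⟩,
    h12.trans ⟨fun h => ⟨SC.court_of_fib hA hS hσ h.1 h.2, SC.recep_of_fib hσ h.1⟩,
      fun h => ⟨SC.negfib_of_court hA hS hσ h.1 h.2, SC.posfib_of_court hS hσ h.1⟩⟩⟩
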